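/- Let p̄ be a sequence with 0 < p(i) < 1 for all i such that log(∏_{i=1}^n (1 − p(i))) / log n → 0 as n → ∞ (so that for every first-order sentence ψ of the language L, lim_{n→∞} Prob(n,p̄;ψ) exists and equals 0 or 1). Then there is no computable function D from L-sentences to {0,1} such that for every sentence ψ of L, D(ψ) = 1 if and only if lim_{n→∞} Prob(n,p̄;ψ) = 1. -/

import Mathlib

open FirstOrder Filter

namespace RandomGraph

/-- The set of potential edges of a graph on `Fin n` (pairs `(v,w)` with `v < w`).
Vertex `v : Fin n` represents the number `v + 1` of the interval `[n] = {1, …, n}`. -/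
abbrev EdgeIdx (n : ℕ) := {e : Fin n × Fin n // e.1 < e.2}

/-- An outcome of the random graph on `[n]`: a choice of which potential edges are present. -/
abbrev Sample (n : ℕ) := EdgeIdx n → Bool

/-- Adjacency of two vertices (described by their values in `Fin n`) in the outcome `ω`. -/
def adjVal {n : ℕ} (ω : Sample n) (a b : ℕ) : Prop :=
  ∃ e : EdgeIdx n, ω e = true ∧
    ((e.1.1.val = a ∧ e.1.2.val = b) ∨ (e.1.1.val = b ∧ e.1.2.val = a))

/-- Adjacency of two vertices in the outcome `ω`. -/
def sampleAdj {n : ℕ} (ω : Sample n) (v w : Fin n) : Prop := adjVal ω v.val w.val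

/-- The probability of the outcome `ω` in the model `G(n, p̄)`: each pair of distinct
vertices at distance `d` is an edge with probability `p d`, independently.  (The value `p 0` is
never used, since distinct vertices are at distance at least 1.) -/
noncomputable def sampleWeight (p : ℕ → ℝ) {n : ℕ} (ω : Sample n) : ℝ :=
  ∏ e : EdgeIdx n,
    (if ω e then p (e.1.2.val - e.1.1.val) else 1 - p (e.1.2.val - e.1.1.val))

/-- The probability of the outcome `ω` in the circular model `C(n, p̄)`: vertices `v, w` are
adjacent with probability `p (min |v-w| (n - |v-w|))`, independently. -/
noncomputable def cWeight (p : ℕ → ℝ) {n : ℕ} (ω : Sample n) : ℝ :=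
  ∏ e : EdgeIdx n,
    (if ω e then p (min (e.1.2.val - e.1.1.val) (n - (e.1.2.val - e.1.1.val)))
      else 1 - p (min (e.1.2.val - e.1.1.val) (n - (e.1.2.val - e.1.1.val))))

open scoped Classical in
/-- The probability of the event `P` in the random graph `G(n, p̄)`. -/
noncomputable def Pr (p : ℕ → ℝ) (n : ℕ) (P : Sample n → Prop) : ℝ :=
  ∑ ω : Sample n, if P ω then sampleWeight p ω else 0

open scoped Classical in
/-- The probability of the event `P` in the circular random graph `C(n, p̄)`. -/
noncomputable def cPr (p : ℕ → ℝ) (n : ℕ) (P : Sample n → Prop) : ℝ :=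
  ∑ ω : Sample n, if P ω then cWeight p ω else 0

/-! ### The language `L` of graphs (also used as the language `L^c`) -/

/-- An outcome `ω` of the random graph, viewed as a structure of `FirstOrder.Language.graph`,
the language with a single binary adjacency predicate. -/
def graphStructure {n : ℕ} (ω : Sample n) : Language.graph.Structure (Fin n) where
  RelMap | .adj => fun x => sampleAdj ω (x 0) (x 1)

/-- Satisfaction of a sentence of the language `L` in the outcome `ω`. -/
def SatL {n : ℕ} (ω : Sample n) (ψ : Language.graph.Sentence) : Prop :=
  @Language.Sentence.Realize _ _ (graphStructure ω) ψ

/-- `Prob(n, p̄; ψ)` for a sentence `ψ` of the language `L`. -/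
noncomputable def ProbL (p : ℕ → ℝ) (n : ℕ) (ψ : Language.graph.Sentence) : ℝ :=
  Pr p n fun ω => SatL ω ψ

/-- The probability that `C(n, p̄)` satisfies a sentence `ψ` of the language `L^c = L`. -/
noncomputable def cProbL (p : ℕ → ℝ) (n : ℕ) (ψ : Language.graph.Sentence) : ℝ :=
  cPr p n fun ω => SatL ω ψ

/-! ### The language `L₊` -/

/-- The constants of the language `L₊`: the first element `1` and the last element `n`. -/
inductive plusFunc : ℕ → Type
  | one : plusFunc 0
  | last : plusFunc 0

/-- The relations of `L₊`: adjacency and successor. -/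
inductive plusRel : ℕ → Type
  | adj : plusRel 2
  | succ : plusRel 2

/-- The language `L₊` with adjacency, successor (`x = y + 1`), and constants `1` and `n`. -/
def Lplus : Language := ⟨plusFunc, plusRel⟩

/-- An outcome `ω` of the random graph on `[m+1]`, as an `L₊`-structure. -/
def plusStructure {m : ℕ} (ω : Sample (m + 1)) : Lplus.Structure (Fin (m + 1)) where
  funMap | .one => fun _ => 0 | .last => fun _ => Fin.last m
  RelMap
    | .adj => fun x => sampleAdj ω (x 0) (x 1)
    | .succ => fun x => (x 0).val = (x 1).val + 1

/-- `Prob(n, p̄; ψ)` for a sentence `ψ` of `L₊` (set to `0` in the irrelevant case `n = 0`,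
where the constants cannot be interpreted). -/
noncomputable def ProbPlus (p : ℕ → ℝ) : ℕ → Lplus.Sentence → ℝ
  | 0, _ => 0
  | (m + 1), ψ => Pr p (m + 1) fun ω => @Language.Sentence.Realize _ _ (plusStructure ω) ψ

/-! ### The language `L≤` -/

/-- The relations of `L≤`: adjacency and linear order. -/
inductive leRel : ℕ → Type
  | adj : leRel 2
  | le : leRel 2

/-- The language `L≤` with adjacency and a linear order. -/
def Lle : Language := ⟨fun _ => Empty, leRel⟩

/-- An outcome `ω` of the random graph on `[n]`, as an `L≤`-structure. -/
def leStructure {n : ℕ} (ω : Sample n) : Lle.Structure (Fin n) where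
  funMap := fun f _ => Empty.elim f
  RelMap
    | .adj => fun x => sampleAdj ω (x 0) (x 1)
    | .le => fun x => x 0 ≤ x 1

/-- Satisfaction of a sentence of `L≤` in the outcome `ω`. -/
def SatLe {n : ℕ} (ω : Sample n) (ψ : Lle.Sentence) : Prop :=
  @Language.Sentence.Realize _ _ (leStructure ω) ψ

/-- `Prob(n, p̄; ψ)` for a sentence `ψ` of `L≤`. -/
noncomputable def ProbLe (p : ℕ → ℝ) (n : ℕ) (ψ : Lle.Sentence) : ℝ :=
  Pr p n fun ω => SatLe ω ψ

/-! ### The circular languages `L₊^c` and `L≤^c` -/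

/-- The relations of `L₊^c`: adjacency and cyclic successor. -/
inductive plusCRel : ℕ → Type
  | adj : plusCRel 2
  | succ : plusCRel 2

/-- The language `L₊^c`, with adjacency and cyclic successor (`x = y + 1 (mod n)`). -/
def LplusC : Language := ⟨fun _ => Empty, plusCRel⟩

/-- An outcome `ω` of the circular random graph on `[n]`, as an `L₊^c`-structure. -/
def plusCStructure {n : ℕ} (ω : Sample n) : LplusC.Structure (Fin n) where
  funMap := fun f _ => Empty.elim f
  RelMap
    | .adj => fun x => sampleAdj ω (x 0) (x 1)
    | .succ => fun x => (x 0).val = ((x 1).val + 1) % n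

/-- The probability that `C(n, p̄)` satisfies a sentence `ψ` of the language `L₊^c`. -/
noncomputable def cProbPlus (p : ℕ → ℝ) (n : ℕ) (ψ : LplusC.Sentence) : ℝ :=
  cPr p n fun ω => @Language.Sentence.Realize _ _ (plusCStructure ω) ψ

/-- The relations of `L≤^c`: adjacency and the ternary clockwise-order predicate. -/
inductive cycRel : ℕ → Type
  | adj : cycRel 2
  | btw : cycRel 3

/-- The language `L≤^c`, with adjacency and the ternary clockwise-order predicate `C`. -/
def Lcyc : Language := ⟨fun _ => Empty, cycRel⟩

/-- `C(a, b, c)`: `a ≤ b ≤ c` holds after some cyclic permutation of `(a, b, c)`. -/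
def cyclicBtw {n : ℕ} (a b c : Fin n) : Prop :=
  (a ≤ b ∧ b ≤ c) ∨ (b ≤ c ∧ c ≤ a) ∨ (c ≤ a ∧ a ≤ b)

/-- An outcome `ω` of the circular random graph on `[n]`, as an `L≤^c`-structure. -/
def cycStructure {n : ℕ} (ω : Sample n) : Lcyc.Structure (Fin n) where
  funMap := fun f _ => Empty.elim f
  RelMap
    | .adj => fun x => sampleAdj ω (x 0) (x 1)
    | .btw => fun x => cyclicBtw (x 0) (x 1) (x 2)

/-- Satisfaction of a sentence of `L≤^c` in the outcome `ω`. -/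
def SatCyc {n : ℕ} (ω : Sample n) (ψ : Lcyc.Sentence) : Prop :=
  @Language.Sentence.Realize _ _ (cycStructure ω) ψ

/-- The probability that `C(n, p̄)` satisfies a sentence `ψ` of the language `L≤^c`. -/
noncomputable def cProbCyc (p : ℕ → ℝ) (n : ℕ) (ψ : Lcyc.Sentence) : ℝ :=
  cPr p n fun ω => SatCyc ω ψ


instance (n : ℕ) : Encodable (Language.graph.Relations n) where
  encode _ := 0
  decode _ := match n with
    | 2 => some .adj
    | 0 => none
    | 1 => none
    | (_ + 3) => none
  encodek r := by cases r; rfl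

instance : IsEmpty (Σ i : ℕ, Language.graph.Functions i) :=
  ⟨fun x => (x.2 : Empty).elim⟩

/-- The standard encoding of a sentence of the language of graphs as a natural number: the
sentence is written as a list of symbols (`FirstOrder.Language.BoundedFormula.listEncode`),
which is then encoded by `Encodable.encode`. -/
def sentenceCode (ψ : Language.graph.Sentence) : ℕ :=
  Encodable.encode ψ.listEncode

/-!
Two facts combine, in the manner of Trakhtenbrot's theorem.

With probability tending to `1`, the random graph contains an isolated induced copy of any given
finite graph `H`. Indeed, cut the vertices into blocks of `h = |H|` consecutive ones. As
`L n = -∑ d ≤ n, log (1 - p d)` is `o(log n)`, each block is an isolated copy of `H` with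
probability at least `C * exp (-2 * h * L n) = n ^ (-o(1))`, while the correlations of a block with
all the others add up to a factor of at most `1 + 2 * h * L n`. The second moment method applies.

On the other hand, for a partial recursive function `c` there are sentences `ψ k`, primitive
recursive in `k`, which hold in a finite graph only if `c` halts on `k`, and which hold in every
graph with an isolated copy of a suitable finite graph if `c` halts on `k`: such a copy encodes the
initial segment of arithmetic in which the computation takes place, and `ψ k` says that some part
of the graph encodes a finite model of arithmetic with a halting computation of `c` on the `k`-th
successor of zero. So `Prob(n, p̄; ψ k)` tends to `1` if `c` halts on `k` and vanishes otherwise,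
and deciding between the two cases would solve the halting problem.
-/

section Arithmetic

open Nat.Partrec (Code)

/-- The relation symbols by which a finite structure describes an initial segment of `ℕ` and the
runs of the partial recursive codes of index at most `M`: the order, the successor relation, the two
components of the pairing function, and the graph of each of these codes. -/
inductive Symbol (M : ℕ)
  | lt
  | succ
  | fst
  | snd
  | run (i : Fin (M + 1))
  deriving Fintype

/-- An interpretation of the symbols of `Symbol M` as binary relations on `U`. -/
abbrev Interp (M : ℕ) (U : Type) := Symbol M → U → U → Prop

namespace Interp

variable {M : ℕ} {U : Type} (R : Interp M U)

/-- `x` is the least element. -/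
def IsZero (x : U) : Prop := ∀ w, ¬ R .lt w x

/-- `n` codes the pair of `a` and `b`. -/
def IsPair (n a b : U) : Prop := R .fst n a ∧ R .snd n b

/-- The code `c`, which must have index at most `M`, is recorded as sending `x` to `y`. -/
def Runs (c : Code) (x y : U) : Prop :=
  ∃ i : Fin (M + 1), i.val = Encodable.encode c ∧ R (.run i) x y

/-- `(a, b)` is the successor of `(a', b')` in the enumeration of pairs by `Nat.pair`; compare
`pair_eq_pair_add_one_iff`. -/
def PairSucc (a' b' a b : U) : Prop :=
  (R .lt a' b' ∧ R .succ a' a ∧ R .lt a b' ∧ b = b') ∨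
  (R .succ a' b' ∧ a = b' ∧ R.IsZero b) ∨
  (R .lt b' a' ∧ a = a' ∧ R .succ b' b) ∨
  (a' = b' ∧ R.IsZero a ∧ R .succ a' b)

/-- The claim that `c` sends `x` to `y` follows from other recorded claims by one of the defining
clauses of `Nat.Partrec.Code.eval`. -/
def Justified : Code → U → U → Prop
  | .zero, _, y => R.IsZero y
  | .succ, x, y => R .succ x y
  | .left, x, y => ∃ b, R.IsPair x y b
  | .right, x, y => ∃ a, R.IsPair x a y
  | .pair f g, x, y => ∃ a b, R.Runs f x a ∧ R.Runs g x b ∧ R.IsPair y a b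
  | .comp f g, x, y => ∃ a, R.Runs g x a ∧ R.Runs f a y
  | .prec f g, x, y => ∃ a m, R.IsPair x a m ∧
      ((R.IsZero m ∧ R.Runs f a y) ∨
        ∃ m' x' w q q', R .succ m' m ∧ R.IsPair x' a m' ∧ R.Runs (.prec f g) x' w ∧
          R.IsPair q m' w ∧ R.IsPair q' a q ∧ R.Runs g q' y)
  | .rfind' f, x, y => ∃ a m w, R.IsPair x a m ∧ R.Runs f x w ∧
      ((R.IsZero w ∧ y = m) ∨
        (¬ R.IsZero w ∧ ∃ m' x', R .succ m m' ∧ R.IsPair x' a m' ∧ R.Runs (.rfind' f) x' y))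

/-- `lt` is a strict linear order, and `succ` relates only consecutive elements. -/
def IsOrder : Prop :=
  (∀ x, ¬ R .lt x x) ∧
  (∀ x y z, R .lt x y → R .lt y z → R .lt x z) ∧
  (∀ x y, R .lt x y ∨ x = y ∨ R .lt y x) ∧
  (∀ x y, R .succ x y → R .lt x y ∧ ∀ w, ¬ (R .lt x w ∧ R .lt w y))

/-- Every element coding a pair is reached from a code of `(0, 0)` by the successor steps of the
enumeration of pairs. -/
def IsPairing : Prop :=
  ∀ n a b, R.IsPair n a b → (R.IsZero n ∧ R.IsZero a ∧ R.IsZero b) ∨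
    ∃ n' a' b', R .succ n' n ∧ R.IsPair n' a' b' ∧ R.PairSucc a' b' a b

/-- All recorded runs are justified. -/
def IsJustified : Prop :=
  ∀ i x y, R (.run i) x y → R.Justified (Denumerable.ofNat Code i) x y

/-- The structure is a correct fragment of arithmetic with correctly recorded runs. -/
def IsArithmetic : Prop := R.IsOrder ∧ R.IsPairing ∧ R.IsJustified

/-- `val` reads the elements of the structure as natural numbers, compatibly with the order, the
successor relation and pairing. -/
structure IsValuation (val : U → ℕ) : Prop where
  lt_iff : ∀ x y, R .lt x y ↔ val x < val y
  isZero_iff : ∀ x, R.IsZero x ↔ val x = 0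
  succ : ∀ x y, R .succ x y → val y = val x + 1
  pair : ∀ n a b, R.IsPair n a b → val n = Nat.pair (val a) (val b)

end Interp

theorem pair_eq_pair_add_one_of_step {a' b' a b : ℕ}
    (h : (a' < b' ∧ a = a' + 1 ∧ a < b' ∧ b = b') ∨ (b' = a' + 1 ∧ a = b' ∧ b = 0) ∨
      (b' < a' ∧ a = a' ∧ b = b' + 1) ∨ (a' = b' ∧ a = 0 ∧ b = a' + 1)) :
    Nat.pair a b = Nat.pair a' b' + 1 := by
  unfold Nat.pair
  rcases h with ⟨h, rfl, h', rfl⟩ | ⟨rfl, rfl, rfl⟩ | ⟨h, rfl, rfl⟩ | ⟨rfl, rfl, rfl⟩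
  · rw [if_pos h', if_pos h]; ring
  · rw [if_neg (by omega), if_pos (by omega)]; ring
  · rw [if_neg (by omega), if_neg (by omega)]; ring
  · rw [if_pos (by omega), if_neg (by omega)]; ring

theorem pair_eq_pair_add_one_iff {a' b' a b : ℕ} :
    Nat.pair a b = Nat.pair a' b' + 1 ↔
      (a' < b' ∧ a = a' + 1 ∧ a < b' ∧ b = b') ∨ (b' = a' + 1 ∧ a = b' ∧ b = 0) ∨
      (b' < a' ∧ a = a' ∧ b = b' + 1) ∨ (a' = b' ∧ a = 0 ∧ b = a' + 1) := by
  refine ⟨fun h => ?_, pair_eq_pair_add_one_of_step⟩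
  have eq_of_step (c d : ℕ) (hcd : Nat.pair c d = Nat.pair a' b' + 1) : a = c ∧ b = d :=
    Nat.pair_eq_pair.1 (h.trans hcd.symm)
  rcases lt_trichotomy a' b' with hlt | rfl | hgt
  · rcases (Nat.succ_le_of_lt hlt).lt_or_eq with hlt' | heq
    · have := eq_of_step (a' + 1) b' (pair_eq_pair_add_one_of_step (by omega))
      omega
    · have := eq_of_step b' 0 (pair_eq_pair_add_one_of_step (by omega))
      omega
  · have := eq_of_step 0 (a' + 1) (pair_eq_pair_add_one_of_step (by omega))
    omega
  · have := eq_of_step a' (b' + 1) (pair_eq_pair_add_one_of_step (by omega))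
    omega

theorem mem_eval_rfind'_of_eq_zero {f : Code} {a m : ℕ} (h : 0 ∈ f.eval (Nat.pair a m)) :
    m ∈ (Code.rfind' f).eval (Nat.pair a m) := by
  obtain ⟨k, hk⟩ := Code.evaln_complete.1 h
  obtain ⟨k, rfl⟩ := Nat.exists_eq_succ_of_ne_zero (Nat.ne_zero_of_lt (Code.evaln_bound hk))
  have hle : Nat.pair a m ≤ k := Nat.lt_succ_iff.1 (Code.evaln_bound hk)
  refine Code.evaln_sound (k := k + 1) ?_
  simp [Code.evaln, hle, Option.mem_def.1 hk]

theorem mem_eval_rfind'_of_ne_zero {f : Code} {a m w y : ℕ} (hw : w ∈ f.eval (Nat.pair a m))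
    (hw0 : w ≠ 0) (hy : y ∈ (Code.rfind' f).eval (Nat.pair a (m + 1))) :
    y ∈ (Code.rfind' f).eval (Nat.pair a m) := by
  obtain ⟨k₁, hk₁⟩ := Code.evaln_complete.1 hw
  obtain ⟨k₂, hk₂⟩ := Code.evaln_complete.1 hy
  have hfw : w ∈ Code.evaln (max k₁ k₂ + 1) f (Nat.pair a m) :=
    Code.evaln_mono (by omega) hk₁
  have hry : y ∈ Code.evaln (max k₁ k₂) (Code.rfind' f) (Nat.pair a (m + 1)) :=
    Code.evaln_mono (by omega) hk₂
  have hle : Nat.pair a m ≤ max k₁ k₂ := Nat.lt_succ_iff.1 (Code.evaln_bound hfw)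
  refine Code.evaln_sound (k := max k₁ k₂ + 1) ?_
  simp [Code.evaln, hle, Option.mem_def.1 hfw, hw0, Option.mem_def.1 hry]

namespace Interp

variable {M : ℕ} {U : Type} {R : Interp M U}

theorem IsOrder.exists_equiv_fin [Finite U] (hR : R.IsOrder) :
    ∃ (N : ℕ) (e : U ≃ Fin N), ∀ x y, R .lt x y ↔ e x < e y := by
  classical
  obtain ⟨irrefl, trans, trichotomy, -⟩ := hR
  have : IsStrictTotalOrder U (R .lt) :=
    { trichotomous := fun x y hxy hyx => by simpa [hxy, hyx] using trichotomy x y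
      irrefl := irrefl
      trans := trans }
  let : LinearOrder U := linearOrderOfSTO (R .lt)
  have := Fintype.ofFinite U
  let e := (Fintype.orderIsoFinOfCardEq U rfl).symm
  exact ⟨_, e.toEquiv, fun x y => (e.lt_iff_lt (x := x) (y := y)).symm⟩

theorem isZero_iff_of_lt_iff {N : ℕ} {e : U ≃ Fin N} (he : ∀ x y, R .lt x y ↔ e x < e y) (x : U) :
    R.IsZero x ↔ (e x).val = 0 := by
  refine ⟨fun h => ?_, fun h w hw => absurd ((he w x).1 hw) (by simp [Fin.lt_def, h])⟩
  by_contra h0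
  refine h (e.symm ⟨0, (e x).pos⟩) ((he _ _).2 ?_)
  simpa [Fin.lt_def] using Nat.pos_of_ne_zero h0

theorem IsOrder.succ_eq (hR : R.IsOrder) {N : ℕ} {e : U ≃ Fin N}
    (he : ∀ x y, R .lt x y ↔ e x < e y) {x y : U} (h : R .succ x y) :
    (e y).val = (e x).val + 1 := by
  obtain ⟨hlt, hcov⟩ := hR.2.2.2 x y h
  have hlt' : (e x).val < e y := (he x y).1 hlt
  by_contra hne
  have hN : (e x).val + 1 < N := by omega
  refine hcov (e.symm ⟨_, hN⟩) ⟨(he _ _).2 ?_, (he _ _).2 ?_⟩ <;>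
    simp only [Equiv.apply_symm_apply, Fin.lt_def] <;> omega

theorem IsPairing.val_eq_pair (hR : R.IsPairing) {val : U → ℕ}
    (lt_iff : ∀ x y, R .lt x y ↔ val x < val y) (isZero_iff : ∀ x, R.IsZero x ↔ val x = 0)
    (succ : ∀ x y, R .succ x y → val y = val x + 1) :
    ∀ n a b, R.IsPair n a b → val n = Nat.pair (val a) (val b) := by
  suffices ∀ k n a b, R.IsPair n a b → val n = k → k = Nat.pair (val a) (val b) from
    fun n a b h => this _ n a b h rfl
  intro k
  induction k with
  | zero =>
    intro n a b hn hk
    rcases hR n a b hn with ⟨-, ha, hb⟩ | ⟨n', -, -, hsucc, -⟩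
    · rw [(isZero_iff a).1 ha, (isZero_iff b).1 hb]; rfl
    · have := succ n' n hsucc
      omega
  | succ k ih =>
    intro n a b hn hk
    rcases hR n a b hn with ⟨hn0, -, -⟩ | ⟨n', a', b', hsucc, hn', hstep⟩
    · have := (isZero_iff n).1 hn0
      omega
    · have hk' := succ n' n hsucc
      rw [ih n' a' b' hn' (by omega), eq_comm]
      refine pair_eq_pair_add_one_of_step (hstep.imp ?_ (Or.imp ?_ (Or.imp ?_ ?_)))
      · exact fun ⟨h₁, h₂, h₃, h₄⟩ => ⟨(lt_iff _ _).1 h₁, succ _ _ h₂, (lt_iff _ _).1 h₃, h₄ ▸ rfl⟩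
      · exact fun ⟨h₁, h₂, h₃⟩ => ⟨succ _ _ h₁, h₂ ▸ rfl, (isZero_iff _).1 h₃⟩
      · exact fun ⟨h₁, h₂, h₃⟩ => ⟨(lt_iff _ _).1 h₁, h₂ ▸ rfl, succ _ _ h₃⟩
      · exact fun ⟨h₁, h₂, h₃⟩ => ⟨h₁ ▸ rfl, (isZero_iff _).1 h₂, succ _ _ h₃⟩

theorem IsOrder.exists_isValuation [Finite U] (hO : R.IsOrder) (hP : R.IsPairing) :
    ∃ val, R.IsValuation val := by
  obtain ⟨N, e, he⟩ := hO.exists_equiv_fin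
  have isZero_iff := isZero_iff_of_lt_iff he
  have succ := fun x y => hO.succ_eq he (x := x) (y := y)
  exact ⟨fun x => e x, he, isZero_iff, succ, hP.val_eq_pair he isZero_iff succ⟩

theorem IsJustified.justified (hJ : R.IsJustified) {c : Code} {x y : U} (h : R.Runs c x y) :
    R.Justified c x y := by
  obtain ⟨i, hi, hxy⟩ := h
  simpa only [hi, Denumerable.ofNat_encode] using hJ i x y hxy

/-- Every recorded run of `c` is a run of `c` on the natural numbers named by `val`. -/
def SoundFor (R : Interp M U) (val : U → ℕ) (c : Code) : Prop :=
  ∀ x y, R.Runs c x y → val y ∈ c.eval (val x)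

variable {val : U → ℕ}

theorem SoundFor.prec (hval : R.IsValuation val) (hJ : R.IsJustified) {f g : Code}
    (hf : SoundFor R val f) (hg : SoundFor R val g) : SoundFor R val (.prec f g) := by
  suffices key : ∀ k x y a, val x = Nat.pair a k → R.Runs (.prec f g) x y →
      val y ∈ (Code.prec f g).eval (Nat.pair a k) by
    intro x y h
    obtain ⟨a, m, hx, -⟩ := hJ.justified h
    exact hval.pair x a m hx ▸ key _ x y _ (hval.pair x a m hx) h
  intro k
  induction k with
  | zero =>
    intro x y a hxa h
    obtain ⟨a', m, hx, hstep⟩ := hJ.justified h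
    obtain ⟨rfl, hm⟩ := Nat.pair_eq_pair.1 (hxa.symm.trans (hval.pair x a' m hx))
    rw [Code.eval_prec_zero]
    rcases hstep with ⟨-, hy⟩ | ⟨m', -, -, -, -, hsucc, -⟩
    · exact hf _ _ hy
    · have := hval.succ m' m hsucc
      omega
  | succ k ih =>
    intro x y a hxa h
    obtain ⟨a', m, hx, hstep⟩ := hJ.justified h
    obtain ⟨rfl, hm⟩ := Nat.pair_eq_pair.1 (hxa.symm.trans (hval.pair x a' m hx))
    rw [Code.eval_prec_succ]
    rcases hstep with ⟨hm0, -⟩ | ⟨m', x', w, q, q', hsucc, hx', hw, hq, hq', hy⟩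
    · have := (hval.isZero_iff m).1 hm0
      omega
    · obtain rfl : val m' = k := by have := hval.succ m' m hsucc; omega
      have hgy := hg q' y hy
      rw [hval.pair _ _ _ hq', hval.pair _ _ _ hq] at hgy
      exact Part.mem_bind (ih x' w _ (hval.pair _ _ _ hx') hw) hgy

theorem SoundFor.rfind' [Finite U] (hval : R.IsValuation val) (hJ : R.IsJustified) {f : Code}
    (hf : SoundFor R val f) : SoundFor R val (.rfind' f) := by
  obtain ⟨N, hN⟩ : ∃ N, ∀ x, val x ≤ N := by
    obtain ⟨N, hN⟩ := (Set.finite_range val).bddAbove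
    exact ⟨N, fun x => hN ⟨x, rfl⟩⟩
  suffices key : ∀ k x y a m, val x = Nat.pair a m → N < m + k → R.Runs (.rfind' f) x y →
      val y ∈ (Code.rfind' f).eval (Nat.pair a m) by
    intro x y h
    obtain ⟨a, m, -, hx, -⟩ := hJ.justified h
    exact hval.pair x a m hx ▸ key (N + 1) x y _ _ (hval.pair x a m hx) (by omega) h
  intro k
  induction k with
  | zero =>
    intro x y a m hxa hlt h
    obtain ⟨a', m', -, hx, -⟩ := hJ.justified h
    obtain ⟨-, rfl⟩ := Nat.pair_eq_pair.1 (hxa.symm.trans (hval.pair x a' m' hx))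
    exact absurd (hN m') (by omega)
  | succ k ih =>
    intro x y a m hxa hlt h
    obtain ⟨a', m₁, w, hx, hw, hstep⟩ := hJ.justified h
    obtain ⟨rfl, rfl⟩ := Nat.pair_eq_pair.1 (hxa.symm.trans (hval.pair x a' m₁ hx))
    have hfw := hxa ▸ hf x w hw
    rcases hstep with ⟨hw0, rfl⟩ | ⟨hw0, m₂, x', hsucc, hx', hy⟩
    · exact mem_eval_rfind'_of_eq_zero ((hval.isZero_iff w).1 hw0 ▸ hfw)
    · have hm₂ := hval.succ _ _ hsucc
      have hx'm := hval.pair _ _ _ hx'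
      rw [hm₂] at hx'm
      exact mem_eval_rfind'_of_ne_zero hfw (mt (hval.isZero_iff w).2 hw0)
        (ih x' y _ _ hx'm (by omega) hy)

theorem IsJustified.soundFor [Finite U] (hJ : R.IsJustified) (hval : R.IsValuation val)
    (c : Code) : SoundFor R val c := by
  induction c with
  | zero =>
    intro x y h
    simp [Code.eval, (hval.isZero_iff y).1 (hJ.justified h), pure, PFun.pure]
  | succ =>
    intro x y h
    simp [Code.eval, hval.succ x y (hJ.justified h)]
  | left =>
    intro x y h
    obtain ⟨b, hx⟩ := hJ.justified h
    simp [Code.eval, hval.pair x y b hx]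
  | right =>
    intro x y h
    obtain ⟨a, hx⟩ := hJ.justified h
    simp [Code.eval, hval.pair x a y hx]
  | pair f g hf hg =>
    intro x y h
    obtain ⟨a, b, ha, hb, hy⟩ := hJ.justified h
    rw [hval.pair y a b hy]
    simp only [Code.eval, Seq.seq, Part.map_eq_map, Part.mem_bind_iff, Part.mem_map_iff]
    exact ⟨_, ⟨_, hf x a ha, rfl⟩, _, hg x b hb, rfl⟩
  | comp f g hf hg =>
    intro x y h
    obtain ⟨a, ha, hy⟩ := hJ.justified h
    exact Part.mem_bind (hg x a ha) (hf a y hy)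
  | prec f g hf hg => exact hf.prec hval hJ hg
  | rfind' f hf => exact hf.rfind' hval hJ

end Interp

/-- The initial segment `{0, …, B}` of `ℕ`, where exactly the runs found by `Code.evaln N` are
recorded. -/
def standardInterp (M N B : ℕ) : Interp M (Fin (B + 1))
  | .lt, x, y => x < y
  | .succ, x, y => y.val = x.val + 1
  | .fst, x, y => y.val = x.val.unpair.1
  | .snd, x, y => y.val = x.val.unpair.2
  | .run i, x, y => y.val ∈ Code.evaln N (Denumerable.ofNat Code i) x

/-- `B` bounds the inputs and outputs of all computations of `Code.evaln N` with codes of index at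
most `M`. -/
def BoundsRuns (M N B : ℕ) : Prop :=
  N ≤ B ∧ ∀ c : Code, Encodable.encode c ≤ M → ∀ x, ∀ y ∈ Code.evaln N c x, y ≤ B

theorem exists_boundsRuns (M N : ℕ) : ∃ B, BoundsRuns M N B := by
  let output (q : ℕ × ℕ) : ℕ := (Code.evaln N (Denumerable.ofNat Code q.1) q.2).getD 0
  let inputs := Finset.range (M + 1) ×ˢ Finset.range N
  refine ⟨max N (inputs.sup output), le_max_left _ _, fun c hc x y hy => ?_⟩
  have hmem : (Encodable.encode c, x) ∈ inputs :=
    Finset.mk_mem_product (Finset.mem_range.2 (by omega)) (Finset.mem_range.2 (Code.evaln_bound hy))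
  have hout : output (Encodable.encode c, x) = y := by
    simp [output, Denumerable.ofNat_encode, Option.mem_def.1 hy]
  exact hout ▸ (Finset.le_sup hmem).trans (le_max_right _ _)

section standardInterp

variable {M N B : ℕ}

theorem isZero_standardInterp {x : Fin (B + 1)} :
    (standardInterp M N B).IsZero x ↔ x.val = 0 := by
  refine ⟨fun h => ?_, fun h w hw => absurd (Fin.lt_def.1 hw) (by omega)⟩
  by_contra h0
  exact h 0 (Fin.pos_of_ne_zero (fun h => h0 (by simp [h])))

theorem isPair_standardInterp {n a b : Fin (B + 1)} :
    (standardInterp M N B).IsPair n a b ↔ n.val = Nat.pair a b := by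
  refine ⟨fun ⟨ha, hb⟩ => ?_, fun h => ⟨?_, ?_⟩⟩
  · rw [ha, hb, Nat.pair_unpair]
  all_goals simp [standardInterp, h]

theorem runs_standardInterp {c : Code} (hc : Encodable.encode c ≤ M) {x y : Fin (B + 1)} :
    (standardInterp M N B).Runs c x y ↔ y.val ∈ Code.evaln N c x := by
  refine ⟨fun ⟨i, hi, h⟩ => ?_, fun h => ⟨⟨_, Nat.lt_succ_of_le hc⟩, rfl, ?_⟩⟩
  · simpa only [standardInterp, hi, Denumerable.ofNat_encode] using h
  · simpa only [standardInterp, Denumerable.ofNat_encode] using h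

theorem isOrder_standardInterp : (standardInterp M N B).IsOrder := by
  refine ⟨fun x => lt_irrefl x, fun x y z => lt_trans, lt_trichotomy, fun x y h => ⟨?_, ?_⟩⟩
  · exact Fin.lt_def.2 (by simp only [standardInterp] at h; omega)
  · rintro w ⟨hxw, hwy⟩
    simp only [standardInterp, Fin.lt_def] at h hxw hwy
    omega

theorem isPairing_standardInterp : (standardInterp M N B).IsPairing := by
  intro n a b hn
  rw [isPair_standardInterp] at hn
  rcases Nat.eq_zero_or_pos n.val with h0 | hpos
  · left
    have := Nat.left_le_pair a b
    have := Nat.right_le_pair a b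
    simp only [isZero_standardInterp]
    omega
  · right
    obtain ⟨k, hk⟩ : ∃ k, n.val = k + 1 := ⟨n.val - 1, by omega⟩
    have hleft := Nat.unpair_left_le k
    have hright := Nat.unpair_right_le k
    refine ⟨⟨k, by omega⟩, ⟨k.unpair.1, by omega⟩, ⟨k.unpair.2, by omega⟩, hk, ?_, ?_⟩
    · simp [isPair_standardInterp]
    · have hstep : Nat.pair a b = Nat.pair k.unpair.1 k.unpair.2 + 1 := by
        rw [Nat.pair_unpair, ← hn, hk]
      rw [pair_eq_pair_add_one_iff] at hstep
      simpa only [Interp.PairSucc, isZero_standardInterp, standardInterp, Fin.lt_def, Fin.ext_iff]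
        using hstep

theorem justified_prec_standardInterp (hB : BoundsRuns M N B) {f g : Code}
    (hc : Encodable.encode (Code.prec f g) ≤ M) {x y : Fin (B + 1)}
    (h : y.val ∈ Code.evaln N (.prec f g) x) :
    (standardInterp M N B).Justified (.prec f g) x y := by
  obtain ⟨hNB, houtput⟩ := hB
  obtain ⟨hencf, hencg⟩ := Code.encode_lt_prec f g
  have hxN := Code.evaln_bound h
  obtain ⟨N, rfl⟩ := Nat.exists_eq_succ_of_ne_zero (Nat.ne_zero_of_lt hxN)
  simp only [Code.evaln, Nat.unpaired, Nat.lt_succ_iff.1 hxN, guard, Option.bind_eq_bind,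
    if_true, Option.pure_def, Option.bind_some] at h
  have hleft := Nat.unpair_left_le x
  have hright := Nat.unpair_right_le x
  refine ⟨⟨x.val.unpair.1, by omega⟩, ⟨x.val.unpair.2, by omega⟩, by
    simp [isPair_standardInterp], ?_⟩
  obtain hm | ⟨m, hm⟩ : x.val.unpair.2 = 0 ∨ ∃ m, x.val.unpair.2 = m + 1 :=
    x.val.unpair.2.eq_zero_or_eq_succ_pred.imp_right (⟨_, ·⟩)
  all_goals rw [hm] at h
  · exact .inl ⟨isZero_standardInterp.2 hm, (runs_standardInterp (by omega)).2 h⟩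
  · obtain ⟨w, hw, hy⟩ := Option.bind_eq_some_iff.1 h
    have hw' := Code.evaln_mono (Nat.le_succ N) hw
    have hwB := houtput _ hc _ _ hw'
    have hx'N := Code.evaln_bound hw
    have hqN := Code.evaln_bound hy
    have hq := Nat.right_le_pair x.val.unpair.1 (Nat.pair m w)
    refine .inr ⟨⟨m, by omega⟩, ⟨Nat.pair x.val.unpair.1 m, by omega⟩, ⟨w, by omega⟩,
      ⟨Nat.pair m w, by omega⟩, ⟨Nat.pair x.val.unpair.1 (Nat.pair m w), by omega⟩, hm, ?_⟩
    exact ⟨isPair_standardInterp.2 rfl, (runs_standardInterp hc).2 hw',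
      isPair_standardInterp.2 rfl, isPair_standardInterp.2 rfl,
      (runs_standardInterp (by omega)).2 hy⟩

theorem justified_rfind'_standardInterp (hB : BoundsRuns M N B) {f : Code}
    (hc : Encodable.encode (Code.rfind' f) ≤ M) {x y : Fin (B + 1)}
    (h : y.val ∈ Code.evaln N (.rfind' f) x) :
    (standardInterp M N B).Justified (.rfind' f) x y := by
  obtain ⟨hNB, houtput⟩ := hB
  have hencf := (Code.encode_lt_rfind' f).le.trans hc
  have hxN := Code.evaln_bound h
  obtain ⟨N, rfl⟩ := Nat.exists_eq_succ_of_ne_zero (Nat.ne_zero_of_lt hxN)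
  simp only [Code.evaln, Nat.unpaired, Nat.lt_succ_iff.1 hxN, guard, Option.bind_eq_bind,
    if_true, Option.pure_def, Option.bind_some, Nat.pair_unpair] at h
  obtain ⟨w, hw, hy⟩ := Option.bind_eq_some_iff.1 h
  have hwB := houtput f hencf _ _ hw
  have hleft := Nat.unpair_left_le x
  have hright := Nat.unpair_right_le x
  refine ⟨⟨x.val.unpair.1, by omega⟩, ⟨x.val.unpair.2, by omega⟩, ⟨w, by omega⟩, by
    simp [isPair_standardInterp], (runs_standardInterp hencf).2 hw, ?_⟩
  rw [isZero_standardInterp]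
  by_cases hw0 : w = 0
  · rw [if_pos hw0] at hy
    exact .inl ⟨hw0, Fin.ext (Option.some.inj hy).symm⟩
  · rw [if_neg hw0] at hy
    have hx'N := Code.evaln_bound hy
    have hmN := (Nat.right_le_pair x.val.unpair.1 (x.val.unpair.2 + 1)).trans_lt hx'N
    refine .inr ⟨hw0, ⟨x.val.unpair.2 + 1, hmN.trans (by omega)⟩,
      ⟨Nat.pair _ _, hx'N.trans (by omega)⟩, rfl,
      isPair_standardInterp.2 rfl, (runs_standardInterp hc).2 (Code.evaln_mono (Nat.le_succ N) hy)⟩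

theorem justified_standardInterp (hB : BoundsRuns M N B)
    {c : Code} (hc : Encodable.encode c ≤ M) {x y : Fin (B + 1)}
    (h : y.val ∈ Code.evaln N c x) : (standardInterp M N B).Justified c x y := by
  have hxN := Code.evaln_bound h
  have hleft := Nat.unpair_left_le x
  have hright := Nat.unpair_right_le x
  obtain ⟨N', rfl⟩ := Nat.exists_eq_succ_of_ne_zero (Nat.ne_zero_of_lt hxN)
  have hxN' := Nat.lt_succ_iff.1 hxN
  cases c with
  | zero =>
    exact isZero_standardInterp.2 (by simpa [Code.evaln, hxN', eq_comm] using h)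
  | succ =>
    exact show y.val = x.val + 1 by simpa [Code.evaln, hxN', eq_comm] using h
  | left =>
    refine ⟨⟨x.val.unpair.2, by omega⟩, ?_, rfl⟩
    exact show y.val = x.val.unpair.1 by simpa [Code.evaln, hxN', eq_comm] using h
  | right =>
    refine ⟨⟨x.val.unpair.1, by omega⟩, rfl, ?_⟩
    exact show y.val = x.val.unpair.2 by simpa [Code.evaln, hxN', eq_comm] using h
  | pair f g =>
    obtain ⟨hencf, hencg⟩ := Code.encode_lt_pair f g
    obtain ⟨a, ha, b, hb, hy⟩ : ∃ a, Code.evaln (N' + 1) f x = some a ∧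
        ∃ b, Code.evaln (N' + 1) g x = some b ∧ Nat.pair a b = y.val := by
      simpa [Code.evaln, hxN', Seq.seq, Option.bind_eq_some_iff] using h
    refine ⟨⟨a, Nat.lt_succ_iff.2 (hB.2 f (by omega) _ _ ha)⟩,
      ⟨b, Nat.lt_succ_iff.2 (hB.2 g (by omega) _ _ hb)⟩, ?_⟩
    exact ⟨(runs_standardInterp (by omega)).2 ha, (runs_standardInterp (by omega)).2 hb,
      isPair_standardInterp.2 hy.symm⟩
  | comp f g =>
    obtain ⟨hencf, hencg⟩ := Code.encode_lt_comp f g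
    obtain ⟨a, ha, hy⟩ : ∃ a, Code.evaln (N' + 1) g x = some a ∧
        Code.evaln (N' + 1) f a = some y.val := by
      simpa [Code.evaln, hxN', Option.bind_eq_some_iff] using h
    exact ⟨⟨a, Nat.lt_succ_iff.2 (hB.2 g (by omega) _ _ ha)⟩,
      (runs_standardInterp (by omega)).2 ha, (runs_standardInterp (by omega)).2 hy⟩
  | prec f g => exact justified_prec_standardInterp hB hc h
  | rfind' f => exact justified_rfind'_standardInterp hB hc h

theorem isArithmetic_standardInterp (hB : BoundsRuns M N B) :
    (standardInterp M N B).IsArithmetic := by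
  refine ⟨isOrder_standardInterp, isPairing_standardInterp, fun i x y h => ?_⟩
  refine justified_standardInterp hB ?_ h
  simpa using Nat.lt_succ_iff.1 i.isLt

end standardInterp

namespace Interp

variable {M : ℕ} {U U' : Type} {R : Interp M U} {R' : Interp M U'}

theorem isZero_equiv_iff (φ : U ≃ U') (hφ : ∀ s x y, R' s (φ x) (φ y) ↔ R s x y) (x : U) :
    R'.IsZero (φ x) ↔ R.IsZero x := by
  simp only [IsZero, φ.surjective.forall, hφ]

theorem runs_equiv_iff (φ : U ≃ U') (hφ : ∀ s x y, R' s (φ x) (φ y) ↔ R s x y) (c : Code)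
    (x y : U) : R'.Runs c (φ x) (φ y) ↔ R.Runs c x y := by
  simp only [Runs, hφ]

theorem justified_equiv_iff (φ : U ≃ U') (hφ : ∀ s x y, R' s (φ x) (φ y) ↔ R s x y) (c : Code)
    (x y : U) : R'.Justified c (φ x) (φ y) ↔ R.Justified c x y := by
  cases c <;> simp only [Justified, IsPair, φ.surjective.exists, isZero_equiv_iff φ hφ,
    runs_equiv_iff φ hφ, hφ, φ.injective.eq_iff]

theorem IsArithmetic.of_equiv (hR : R.IsArithmetic) (φ : U ≃ U')
    (hφ : ∀ s x y, R' s (φ x) (φ y) ↔ R s x y) : R'.IsArithmetic := by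
  obtain ⟨hO, hP, hJ⟩ := hR
  refine ⟨?_, ?_, ?_⟩
  · simpa only [IsOrder, φ.surjective.forall, hφ, φ.injective.eq_iff] using hO
  · simpa only [IsPairing, IsPair, PairSucc, φ.surjective.forall, φ.surjective.exists,
      isZero_equiv_iff φ hφ, hφ, φ.injective.eq_iff] using hP
  · simpa only [IsJustified, φ.surjective.forall, justified_equiv_iff φ hφ, hφ] using hJ

end Interp

end Arithmetic

section Coding

/-- `G` contains `H` as an induced subgraph which is a union of connected components. -/
def HasIsolatedCopy {W V : Type} (H : SimpleGraph W) (G : SimpleGraph V) : Prop :=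
  ∃ ι : H ↪g G, ∀ a v, G.Adj (ι a) v → v ∈ Set.range ι

theorem HasIsolatedCopy.congr {W W' V : Type} {H : SimpleGraph W} {H' : SimpleGraph W'}
    {G : SimpleGraph V} (h : HasIsolatedCopy H' G) (e : H ≃g H') : HasIsolatedCopy H G := by
  obtain ⟨ι, hι⟩ := h
  refine ⟨ι.comp e.toEmbedding, fun a v hav => ?_⟩
  obtain ⟨b, rfl⟩ := hι _ v hav
  exact ⟨e.symm b, by simp⟩

/-- `x` and `y` are linked through the symbol vertex `r`: some neighbour `t` of `r`, standing for
the tuple `(x, y)`, is adjacent to `x` itself, and to `y` via an intermediate neighbour of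
`port`. -/
def Linked {V : Type} (G : SimpleGraph V) (port r x y : V) : Prop :=
  ∃ t a, G.Adj t r ∧ G.Adj t x ∧ G.Adj t a ∧ G.Adj a port ∧ G.Adj a y

theorem linked_iff_of_isolated {W V : Type} {H : SimpleGraph W} {G : SimpleGraph V} {ι : H ↪g G}
    (hι : ∀ a v, G.Adj (ι a) v → v ∈ Set.range ι) {port r x y : W} :
    Linked G (ι port) (ι r) (ι x) (ι y) ↔ Linked H port r x y := by
  constructor
  · rintro ⟨t, a, htr, htx, hta, hap, hay⟩
    obtain ⟨t, rfl⟩ := hι _ _ htr.symm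
    obtain ⟨a, rfl⟩ := hι _ _ hap.symm
    simp only [ι.map_adj_iff] at htr htx hta hap hay
    exact ⟨t, a, htr, htx, hta, hap, hay⟩
  · rintro ⟨t, a, h⟩
    exact ⟨ι t, ι a, by simpa only [ι.map_adj_iff] using h⟩

/-- The vertices of the graph coding a family of binary relations on `W` indexed by `ρ`: two
vertices marking the classes `num` and `port`, one vertex for each symbol, two vertices for each
element of `W`, and one vertex for each potential instance `r x y` of a relation. -/
inductive CodingVertex (ρ W : Type)
  | numClass
  | portClass
  | symbol (r : ρ)
  | num (w : W)
  | port (w : W)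
  | tuple (r : ρ) (x y : W)
  deriving Fintype

/-- The edges of the coding graph, each listed in one direction. -/
def CodingEdge {ρ W : Type} (R : ρ → W → W → Prop) : CodingVertex ρ W → CodingVertex ρ W → Prop
  | .num _, .numClass => True
  | .port _, .portClass => True
  | .num w, .port w' => w = w'
  | .tuple _ x _, .num w => w = x
  | .tuple _ _ y, .port w => w = y
  | .tuple r x y, .symbol r' => r' = r ∧ R r x y
  | _, _ => False

/-- The graph coding the family `R` of binary relations: `R r x y` holds if and only if
`num x` and `num y` are linked through `symbol r`. -/
def codingGraph {ρ W : Type} (R : ρ → W → W → Prop) : SimpleGraph (CodingVertex ρ W) :=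
  SimpleGraph.fromRel (CodingEdge R)

variable {ρ W : Type} {R : ρ → W → W → Prop}

theorem codingGraph_adj {a b : CodingVertex ρ W} :
    (codingGraph R).Adj a b ↔ CodingEdge R a b ∨ CodingEdge R b a := by
  refine and_iff_right_of_imp fun h => ?_
  rintro rfl
  cases a <;> simp [CodingEdge] at h

theorem codingGraph_adj_numClass {a : CodingVertex ρ W} :
    (codingGraph R).Adj a .numClass ↔ ∃ w, a = .num w := by
  cases a <;> simp [codingGraph_adj, CodingEdge]

theorem linked_codingGraph {r : ρ} {x y : W} :
    Linked (codingGraph R) .portClass (.symbol r) (.num x) (.num y) ↔ R r x y := by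
  constructor
  · rintro ⟨t, a, htr, htx, hta, hap, hay⟩
    rw [codingGraph_adj] at htr htx hta hap hay
    cases t <;> cases a <;> simp_all [CodingEdge]
  · refine fun h => ⟨.tuple r x y, .port y, ?_⟩
    simp [codingGraph_adj, CodingEdge, h]

theorem exists_equiv_of_isolated_codingGraph {V : Type} {G : SimpleGraph V}
    {ι : codingGraph R ↪g G} (hι : ∀ a v, G.Adj (ι a) v → v ∈ Set.range ι) :
    ∃ φ : W ≃ {v // G.Adj v (ι .numClass)}, ∀ r x y,
      Linked G (ι .portClass) (ι (.symbol r)) (φ x) (φ y) ↔ R r x y := by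
  let f : W → {v // G.Adj v (ι .numClass)} := fun w =>
    ⟨ι (.num w), ι.map_adj_iff.2 (codingGraph_adj_numClass.2 ⟨w, rfl⟩)⟩
  have hf : f.Bijective := by
    refine ⟨fun x y h => ?_, fun ⟨v, hv⟩ => ?_⟩
    · exact CodingVertex.num.inj (ι.injective (congrArg Subtype.val h))
    · obtain ⟨a, rfl⟩ := hι _ _ hv.symm
      obtain ⟨w, rfl⟩ := codingGraph_adj_numClass.1 (ι.map_adj_iff.1 hv)
      exact ⟨w, rfl⟩
  exact ⟨.ofBijective f hf, fun r x y => (linked_iff_of_isolated hι).trans linked_codingGraph⟩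

end Coding

section Definability

open FirstOrder.Language (BoundedFormula Formula)
open Nat.Partrec (Code)

/-- A property of assignments of the variables `α` in graphs which is expressed by a first-order
formula. -/
def IsDefinable {α : Type} (P : ∀ V : Type, SimpleGraph V → (α → V) → Prop) : Prop :=
  ∃ φ : Language.graph.Formula α, ∀ (V : Type) (G : SimpleGraph V) (v : α → V),
    @Formula.Realize _ _ G.structure _ φ v ↔ P V G v

namespace IsDefinable

variable {α : Type} {P Q : ∀ V : Type, SimpleGraph V → (α → V) → Prop}

theorem adj (i j : α) : IsDefinable fun _ G (v : α → _) => G.Adj (v i) (v j) :=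
  ⟨Language.Relations.formula₂ (L := Language.graph) Language.adj (.var i) (.var j),
    fun V G v => by
      let := G.structure
      rw [Formula.realize_rel₂]
      rfl⟩

theorem eq (i j : α) : IsDefinable fun _ _ (v : α → _) => v i = v j :=
  ⟨(Language.Term.var i).equal (.var j), fun V G v => by
    let := G.structure
    rw [Formula.realize_equal]
    rfl⟩

theorem const (p : Prop) : IsDefinable fun _ _ (_ : α → _) => p := by
  by_cases hp : p
  · exact ⟨⊤, fun V G v => by simp [hp, Formula.Realize]⟩
  · exact ⟨⊥, fun V G v => by simp [hp, Formula.Realize]⟩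

theorem not (h : IsDefinable P) : IsDefinable fun V G v => ¬ P V G v := by
  obtain ⟨φ, hφ⟩ := h
  exact ⟨φ.not, fun V G v => by
    let := G.structure
    rw [Formula.realize_not, hφ]⟩

theorem and (h : IsDefinable P) (h' : IsDefinable Q) :
    IsDefinable fun V G v => P V G v ∧ Q V G v := by
  obtain ⟨φ, hφ⟩ := h
  obtain ⟨φ', hφ'⟩ := h'
  exact ⟨φ ⊓ φ', fun V G v => by
    let := G.structure
    rw [Formula.realize_inf, hφ, hφ']⟩

theorem or (h : IsDefinable P) (h' : IsDefinable Q) :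
    IsDefinable fun V G v => P V G v ∨ Q V G v := by
  obtain ⟨φ, hφ⟩ := h
  obtain ⟨φ', hφ'⟩ := h'
  exact ⟨φ ⊔ φ', fun V G v => by
    let := G.structure
    rw [Formula.realize_sup, hφ, hφ']⟩

theorem imp (h : IsDefinable P) (h' : IsDefinable Q) :
    IsDefinable fun V G v => P V G v → Q V G v := by
  obtain ⟨φ, hφ⟩ := h
  obtain ⟨φ', hφ'⟩ := h'
  exact ⟨φ.imp φ', fun V G v => by
    let := G.structure
    rw [Formula.realize_imp, hφ, hφ']⟩

theorem forall_finite {β : Type} [Finite β] {P : β → ∀ V : Type, SimpleGraph V → (α → V) → Prop}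
    (h : ∀ b, IsDefinable (P b)) : IsDefinable fun V G v => ∀ b, P b V G v := by
  choose φ hφ using h
  exact ⟨.iInf φ, fun V G v => by simp only [Formula.realize_iInf, hφ]⟩

theorem exists_finite {β : Type} [Finite β] {P : β → ∀ V : Type, SimpleGraph V → (α → V) → Prop}
    (h : ∀ b, IsDefinable (P b)) : IsDefinable fun V G v => ∃ b, P b V G v := by
  choose φ hφ using h
  exact ⟨.iSup φ, fun V G v => by simp only [Formula.realize_iSup, hφ]⟩

theorem ex {Q : ∀ V : Type, SimpleGraph V → (α → V) → V → Prop}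
    (h : IsDefinable fun V G (w : Option α → V) => Q V G (fun i => w (some i)) (w none)) :
    IsDefinable fun V G v => ∃ x, Q V G v x := by
  obtain ⟨φ, hφ⟩ := h
  let ψ : Language.graph.BoundedFormula α 1 :=
    BoundedFormula.relabel (n := 1) (k := 0) (fun o => o.elim (.inr 0) .inl) φ
  refine ⟨ψ.ex, fun V G v => ?_⟩
  let := G.structure
  refine BoundedFormula.realize_ex.trans (exists_congr fun x => ?_)
  refine (BoundedFormula.realize_relabel (n := 0) (m := 1)).trans ?_
  refine Iff.trans (iff_of_eq ?_) (hφ V G fun o => o.elim x v)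
  refine congr (congrArg _ (funext fun o => ?_)) (Subsingleton.elim _ _)
  cases o with
  | none => simp [Fin.snoc]
  | some i => rfl

theorem all {Q : ∀ V : Type, SimpleGraph V → (α → V) → V → Prop}
    (h : IsDefinable fun V G (w : Option α → V) => Q V G (fun i => w (some i)) (w none)) :
    IsDefinable fun V G v => ∀ x, Q V G v x := by
  simpa only [not_exists, not_not] using (ex (Q := fun V G v x => ¬ Q V G v x) h.not).not

theorem linked (port r x y : α) :
    IsDefinable fun _ G (v : α → _) => Linked G (v port) (v r) (v x) (v y) :=
  ex (ex ((adj _ _).and ((adj _ _).and ((adj _ _).and ((adj _ _).and (adj _ _))))))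

end IsDefinable

/-- The vertices of a graph that have to be named in order to read an interpretation of `Symbol M`
off it, together with the element `zero` and the `input` of a computation. -/
inductive Param (M : ℕ)
  | num
  | port
  | zero
  | input
  | rel (s : Symbol M)

variable {M : ℕ}

/-- The interpretation of `Symbol M` read off a graph with named vertices: the elements are the
neighbours of the vertex named `num`. -/
def graphInterp {V : Type} (G : SimpleGraph V) (g : Param M → V) :
    Interp M {v // G.Adj v (g .num)} :=
  fun s x y => Linked G (g .port) (g (.rel s)) x y

/-- The named graph describes arithmetic together with a run of `c` on `input`. -/
def DescribesRun {V : Type} (c : Code) (G : SimpleGraph V) (g : Param M → V) : Prop :=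
  (graphInterp G g).IsArithmetic ∧
  (∃ z, z.val = g .zero ∧ (graphInterp G g).IsZero z) ∧
  ∃ x y, x.val = g .input ∧ (graphInterp G g).Runs c x y

theorem isDefinable_describesRun (c : Code) :
    IsDefinable fun _ G (g : Param M → _) => DescribesRun c G g := by
  refine .and (.and ?_ (.and ?_ (.forall_finite fun i => ?_))) (.and ?_ ?_)
  on_goal 3 =>
    generalize Denumerable.ofNat Code i = c'
    cases c'
  all_goals
    simp only [Interp.Justified, Interp.IsOrder, Interp.IsPairing, Interp.PairSucc, Interp.Runs,
      Interp.IsPair, Interp.IsZero, graphInterp, Subtype.forall, Subtype.exists, exists_prop,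
      Subtype.mk.injEq]
    repeat' first
      | exact .adj _ _
      | exact .linked _ _ _ _
      | exact .eq _ _
      | exact .const _
      | apply IsDefinable.and
      | apply IsDefinable.or
      | apply IsDefinable.not
      | apply IsDefinable.imp
      | apply IsDefinable.all
      | apply IsDefinable.ex
      | refine .exists_finite fun i => ?_

end Definability

section Sentences

open FirstOrder.Language (BoundedFormula Term Sentence)
open Nat.Partrec (Code)

/-- `y` is reached from `z` by `k` steps of the relation `S`. -/
def Reaches {V : Type} (S : V → V → Prop) (z : V) : ℕ → V → Prop
  | 0, y => y = z
  | k + 1, y => ∃ y', S y' y ∧ Reaches S z k y'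

/-- The successor step of the structure read off a graph whose vertices `num`, `port` and `succ` are
given. -/
def SuccStep {V : Type} (G : SimpleGraph V) (num port succ y' y : V) : Prop :=
  G.Adj y' num ∧ Linked G port succ y' y

/-- The `i`-th of `n + 1` quantified variables; the index is taken modulo `n + 1`. -/
def boundVar (n i : ℕ) : Language.graph.Term (Empty ⊕ Fin (n + 1)) :=
  .var (.inr (Fin.ofNat (n + 1) i))

/-- The formula stating that the `i`-th and the `j`-th variable are adjacent. -/
def adjFormula (n i j : ℕ) : Language.graph.BoundedFormula Empty (n + 1) :=
  Language.Relations.boundedFormula₂ (L := Language.graph) Language.adj (boundVar n i)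
    (boundVar n j)

/-- The formula stating that `φ` holds if all the adjacencies listed in `l` hold. -/
def adjImp {n : ℕ} (l : List (ℕ × ℕ)) (φ : Language.graph.BoundedFormula Empty (n + 1)) :
    Language.graph.BoundedFormula Empty (n + 1) :=
  l.foldr (fun q φ => (adjFormula n q.1 q.2).imp φ) φ

/-- The adjacencies expressing `SuccStep` from variable `m + 3` to variable `m`, where the variables
`0`, `1` and `3` stand for `num`, `port` and `succ`, and `m + 1` and `m + 2` are the witnesses for
`Linked`. -/
def stepAtoms (m : ℕ) : List (ℕ × ℕ) :=
  [(m + 3, 0), (m + 1, 3), (m + 1, m + 3), (m + 1, m + 2), (m + 2, 1), (m + 2, m)]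

/-- The formula stating that variable `m` is not reached in `k` successor steps from variable `2`.
It is stated negatively so that it is built from `all` and `imp` alone, which keeps its list of
symbols simple. -/
def notReachesFormula : (k m : ℕ) → Language.graph.BoundedFormula Empty (m + 1)
  | 0, m => ((boundVar m m).bdEqual (boundVar m 2)).imp .falsum
  | k + 1, m => .all (.all (.all (adjImp (stepAtoms m) (notReachesFormula k (m + 3)))))

section Realize

variable {V : Type} {G : SimpleGraph V} {v : Empty → V} {f : ℕ → V} {n m : ℕ}

theorem realize_boundVar {i : ℕ} (hi : i ≤ n) :
    @Term.realize _ _ G.structure _ (Sum.elim v fun a : Fin (n + 1) => f a) (boundVar n i) =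
      f i := by
  simp [boundVar, Nat.mod_eq_of_lt (Nat.lt_succ_of_le hi)]

theorem realize_adjFormula {i j : ℕ} (hi : i ≤ n) (hj : j ≤ n) :
    @BoundedFormula.Realize _ _ G.structure _ _ (adjFormula n i j) v (fun a => f a) ↔
      G.Adj (f i) (f j) := by
  let := G.structure
  rw [adjFormula, BoundedFormula.realize_rel₂, realize_boundVar hi, realize_boundVar hj]
  rfl

theorem realize_adjImp {l : List (ℕ × ℕ)} (hl : ∀ q ∈ l, q.1 ≤ n ∧ q.2 ≤ n)
    (φ : Language.graph.BoundedFormula Empty (n + 1)) :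
    @BoundedFormula.Realize _ _ G.structure _ _ (adjImp l φ) v (fun a => f a) ↔
      ((∀ q ∈ l, G.Adj (f q.1) (f q.2)) →
        @BoundedFormula.Realize _ _ G.structure _ _ φ v (fun a => f a)) := by
  let := G.structure
  induction l with
  | nil => simp [adjImp]
  | cons q l ih =>
    rw [List.forall_mem_cons] at hl
    refine BoundedFormula.realize_imp.trans ?_
    rw [realize_adjFormula hl.1.1 hl.1.2, List.forall_mem_cons, and_imp]
    exact imp_congr_right fun _ => ih hl.2

theorem snoc_eq_update (f : ℕ → V) (n : ℕ) (t : V) :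
    (Fin.snoc (fun i : Fin n => f i) t : Fin (n + 1) → V) =
      fun i : Fin (n + 1) => Function.update f n t i := by
  funext i
  cases i using Fin.lastCases with
  | last => simp
  | cast i => simp [i.isLt.ne]

theorem realize_adjImp_stepAtoms (φ : Language.graph.BoundedFormula Empty (m + 3 + 1)) :
    @BoundedFormula.Realize _ _ G.structure _ _ (adjImp (stepAtoms m) φ) v (fun a => f a) ↔
      (G.Adj (f (m + 3)) (f 0) → G.Adj (f (m + 1)) (f 3) → G.Adj (f (m + 1)) (f (m + 3)) →
        G.Adj (f (m + 1)) (f (m + 2)) → G.Adj (f (m + 2)) (f 1) → G.Adj (f (m + 2)) (f m) →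
        @BoundedFormula.Realize _ _ G.structure _ _ φ v (fun a => f a)) := by
  rw [realize_adjImp (by simp only [stepAtoms, List.forall_mem_cons]; grind)]
  simp [stepAtoms]

theorem realize_notReachesFormula (k : ℕ) (hm : 3 ≤ m) :
    @BoundedFormula.Realize _ _ G.structure _ _ (notReachesFormula k m) v (fun a => f a) ↔
      ¬ Reaches (SuccStep G (f 0) (f 1) (f 3)) (f 2) k (f m) := by
  let := G.structure
  induction k generalizing m f with
  | zero =>
    simp only [notReachesFormula, BoundedFormula.realize_imp, BoundedFormula.realize_bdEqual]
    rw [realize_boundVar le_rfl, realize_boundVar (by lia)]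
    rfl
  | succ k ih =>
    have hbody : ∀ t a y', (adjImp (stepAtoms m) (notReachesFormula k (m + 3))).Realize v
        (fun i => Function.update (Function.update (Function.update f (m + 1) t) (m + 2) a)
          (m + 3) y' i) ↔
        (G.Adj y' (f 0) → G.Adj t (f 3) → G.Adj t y' → G.Adj t a → G.Adj a (f 1) → G.Adj a (f m) →
          ¬ Reaches (SuccStep G (f 0) (f 1) (f 3)) (f 2) k y') := by
      intro t a y'
      simp only [realize_adjImp_stepAtoms, ih (Nat.le_add_left 3 m)]
      have hold : ∀ i ≤ m, Function.update (Function.update (Function.update f (m + 1) t) (m + 2) a)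
          (m + 3) y' i = f i := fun i hi => by
        simp [Function.update_of_ne, (by lia : i ≠ m + 1), (by lia : i ≠ m + 2),
          (by lia : i ≠ m + 3)]
      rw [hold 0 (by lia), hold 1 (by lia), hold 2 (by lia), hold 3 hm, hold m le_rfl]
      simp
    simp only [notReachesFormula, BoundedFormula.realize_all, snoc_eq_update, hbody]
    simp only [Reaches, SuccStep, Linked]
    grind

end Realize

variable {M : ℕ}

/-- The position of a named vertex among the quantified variables of `haltingSentence`. The
positions of `num`, `port`, `zero` and `rel .succ` are those assumed in `notReachesFormula`, and
`input` comes last. -/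
def Param.index : Param M → Fin (8 + M + 1)
  | .num => ⟨0, by lia⟩
  | .port => ⟨1, by lia⟩
  | .zero => ⟨2, by lia⟩
  | .rel .succ => ⟨3, by lia⟩
  | .rel .lt => ⟨4, by lia⟩
  | .rel .fst => ⟨5, by lia⟩
  | .rel .snd => ⟨6, by lia⟩
  | .rel (.run i) => ⟨7 + i, by lia⟩
  | .input => ⟨8 + M, by lia⟩

theorem Param.index_injective : Function.Injective (Param.index (M := M)) := by
  intro p q h
  rcases p with _ | _ | _ | _ | (_ | _ | _ | _ | i) <;>
    rcases q with _ | _ | _ | _ | (_ | _ | _ | _ | j) <;>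
    simp only [Param.index, Fin.mk.injEq] at h <;> first | rfl | lia | skip
  rw [show i = j from Fin.ext (by lia)]

/-- A formula equivalent to `DescribesRun c`, the vertex named `p` being variable `p.index`. -/
noncomputable def runFormula (M : ℕ) (c : Code) : Language.graph.BoundedFormula Empty (8 + M + 1) :=
  BoundedFormula.relabel (n := 8 + M + 1) (k := 0) (fun p => .inr p.index)
    (isDefinable_describesRun (M := M) c).choose

/-- The sentence stating that the graph describes a run of `c` on the number `k`. -/
noncomputable def haltingSentence (M : ℕ) (c : Code) (k : ℕ) : Language.graph.Sentence :=
  .imp (BoundedFormula.alls ((runFormula M c).imp (notReachesFormula k (8 + M)))) .falsum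

variable {V : Type} (G : SimpleGraph V)

theorem realize_runFormula (c : Code) (v : Empty → V) (w : Fin (8 + M + 1) → V) :
    @BoundedFormula.Realize _ _ G.structure _ _ (runFormula M c) v w ↔
      DescribesRun c G (w ∘ Param.index) := by
  let := G.structure
  refine (BoundedFormula.realize_relabel (n := 0) (m := 8 + M + 1)).trans ?_
  refine (iff_of_eq ?_).trans
    ((isDefinable_describesRun c).choose_spec V G (w ∘ Param.index))
  exact congr (congrArg _ rfl) (Subsingleton.elim _ _)

theorem realize_haltingSentence (c : Code) (k : ℕ) :
    @Sentence.Realize _ V G.structure (haltingSentence M c k) ↔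
      ∃ g : Param M → V, DescribesRun c G g ∧
        Reaches (SuccStep G (g .num) (g .port) (g (.rel .succ))) (g .zero) k (g .input) := by
  let := G.structure
  have hreach : ∀ (v : Empty → V) (w : Fin (8 + M + 1) → V),
      (notReachesFormula k (8 + M)).Realize v w ↔
        ¬ Reaches (SuccStep G (w (Param.index .num)) (w (Param.index .port))
          (w (Param.index (.rel .succ)))) (w (Param.index .zero)) k (w (Param.index .input)) := by
    intro v w
    obtain ⟨f, rfl⟩ : ∃ f : ℕ → V, w = fun i : Fin (8 + M + 1) => f i :=
      ⟨fun i => w (Fin.ofNat _ i), funext fun i => by simp⟩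
    exact realize_notReachesFormula k (by lia)
  have hall : (haltingSentence M c k).Realize V ↔ ∃ w : Fin (8 + M + 1) → V,
      DescribesRun c G (w ∘ Param.index) ∧
        Reaches (SuccStep G (w (Param.index .num)) (w (Param.index .port))
          (w (Param.index (.rel .succ)))) (w (Param.index .zero)) k (w (Param.index .input)) := by
    refine (not_congr BoundedFormula.realize_alls).trans ?_
    simp only [BoundedFormula.realize_imp, realize_runFormula, hreach]
    push Not
    rfl
  rw [hall]
  refine ⟨fun ⟨w, hw⟩ => ⟨w ∘ Param.index, hw⟩, fun ⟨g, hg⟩ => ?_⟩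
  have : Nonempty V := ⟨g .num⟩
  obtain ⟨w, rfl⟩ := Param.index_injective.surjective_comp_right g
  exact ⟨w, hg⟩

end Sentences

section Encoding

open FirstOrder.Language (BoundedFormula)
open Encodable (encode)
open Nat.Partrec (Code)

/-- The list of symbols of a formula, each replaced by its code. -/
def symbolCodes {n : ℕ} (φ : Language.graph.BoundedFormula Empty n) : List ℕ :=
  φ.listEncode.map encode

theorem encode_map_encode {α : Type} [Encodable α] (l : List α) :
    encode (l.map encode) = encode l := by
  induction l with
  | nil => rfl
  | cons a l ih =>
    rw [List.map_cons, Encodable.encode_list_cons, Encodable.encode_list_cons, ih]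
    rfl

/-- The code of a number as a symbol of a formula. The number `0` marks an implication, `1` a
universal quantifier, and `n + 2` the formula `⊥` in `n` variables. -/
def numeralCode (d : ℕ) : ℕ := 2 * (2 * d + 1) + 1

/-- The code of `boundVar n i` as a symbol of a formula. -/
def varCode (n i : ℕ) : ℕ := 2 * Nat.pair (n + 1) (Nat.pair (2 * (2 * (i % (n + 1)) + 1)) 0 + 1)

theorem symbolCodes_all {n : ℕ} (φ : Language.graph.BoundedFormula Empty (n + 1)) :
    symbolCodes φ.all = numeralCode 1 :: symbolCodes φ := rfl

theorem symbolCodes_imp {n : ℕ} (φ ψ : Language.graph.BoundedFormula Empty n) :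
    symbolCodes (φ.imp ψ) = numeralCode 0 :: (symbolCodes φ ++ symbolCodes ψ) := by
  simp only [symbolCodes, BoundedFormula.listEncode, List.map_cons, List.map_append,
    List.cons_append]
  rfl

theorem exists_symbolCodes_alls (n : ℕ) : ∃ l, ∀ φ : Language.graph.BoundedFormula Empty n,
    symbolCodes φ.alls = l ++ symbolCodes φ := by
  induction n with
  | zero => exact ⟨[], fun φ => rfl⟩
  | succ n ih =>
    obtain ⟨l, hl⟩ := ih
    exact ⟨l ++ [numeralCode 1], fun φ => by rw [BoundedFormula.alls, hl, symbolCodes_all]; simp⟩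

theorem symbolCodes_adjImp {n : ℕ} (l : List (ℕ × ℕ))
    (φ : Language.graph.BoundedFormula Empty (n + 1)) :
    symbolCodes (adjImp l φ) =
      (l.flatMap fun q => numeralCode 0 :: symbolCodes (adjFormula n q.1 q.2)) ++
        symbolCodes φ := by
  induction l with
  | nil => rfl
  | cons q l ih =>
    refine (symbolCodes_imp _ _).trans ?_
    rw [List.flatMap_cons, List.append_assoc, ← ih]
    rfl

theorem symbolCodes_adjFormula (n i j : ℕ) : symbolCodes (adjFormula n i j) =
    [2 * (2 * Nat.pair 2 0) + 1, numeralCode (n + 1), varCode n i, varCode n j] := rfl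

theorem symbolCodes_notReachesFormula_zero (m : ℕ) : symbolCodes (notReachesFormula 0 m) =
    [numeralCode 0, varCode m m, varCode m 2, numeralCode (m + 3)] := rfl

/-- The codes of the symbols that an additional step contributes to `notReachesFormula`. -/
def stepCodes (m : ℕ) : List ℕ :=
  List.replicate 3 (numeralCode 1) ++
    (stepAtoms m).flatMap fun q => numeralCode 0 :: symbolCodes (adjFormula (m + 3) q.1 q.2)

theorem symbolCodes_notReachesFormula_succ (k m : ℕ) : symbolCodes (notReachesFormula (k + 1) m) =
    stepCodes m ++ symbolCodes (notReachesFormula k (m + 3)) := by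
  rw [stepCodes, List.append_assoc, ← symbolCodes_adjImp]
  rfl

theorem symbolCodes_notReachesFormula (k m : ℕ) : symbolCodes (notReachesFormula k m) =
    ((List.range k).flatMap fun j => stepCodes (m + 3 * j)) ++
      symbolCodes (notReachesFormula 0 (m + 3 * k)) := by
  induction k generalizing m with
  | zero => rfl
  | succ k ih =>
    have hshift : ∀ j, m + 3 + 3 * j = m + 3 * (j + 1) := by lia
    rw [symbolCodes_notReachesFormula_succ, ih]
    simp only [symbolCodes_notReachesFormula_zero, hshift, List.range_succ_eq_map,
      List.flatMap_cons, List.flatMap_map, List.append_assoc, mul_zero, add_zero,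
      Nat.succ_eq_add_one]

theorem primrec_numeralCode : Primrec numeralCode :=
  Primrec.succ.comp (Primrec.nat_double.comp (Primrec.succ.comp Primrec.nat_double))

theorem primrec_varCode : Primrec₂ varCode := by
  have hn : Primrec fun q : ℕ × ℕ => q.1 + 1 := Primrec.succ.comp .fst
  have hi : Primrec fun q : ℕ × ℕ => 2 * (2 * (q.2 % (q.1 + 1)) + 1) :=
    Primrec.nat_double.comp (Primrec.succ.comp (Primrec.nat_double.comp
      (Primrec.nat_mod.comp .snd hn)))
  exact Primrec.nat_double.comp (Primrec₂.natPair.comp hn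
    (Primrec.succ.comp (Primrec₂.natPair.comp hi (.const 0))))

theorem primrec_symbolCodes_adjFormula {α : Type} [Primcodable α] {n i j : α → ℕ} (hn : Primrec n)
    (hi : Primrec i) (hj : Primrec j) :
    Primrec fun a => symbolCodes (adjFormula (n a) (i a) (j a)) := by
  simp only [symbolCodes_adjFormula]
  exact Primrec.list_cons.comp (.const _) (Primrec.list_cons.comp
    (primrec_numeralCode.comp (Primrec.succ.comp hn)) (Primrec.list_cons.comp
    (primrec_varCode.comp hn hi) (Primrec.list_cons.comp (primrec_varCode.comp hn hj) (.const _))))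

theorem primrec_symbolCodes_notReachesFormula_zero :
    Primrec fun m => symbolCodes (notReachesFormula 0 m) := by
  simp only [symbolCodes_notReachesFormula_zero]
  exact Primrec.list_cons.comp (.const _) (Primrec.list_cons.comp
    (primrec_varCode.comp .id .id) (Primrec.list_cons.comp (primrec_varCode.comp .id (.const 2))
    (Primrec.list_cons.comp (primrec_numeralCode.comp
      (Primrec.nat_add.comp .id (.const 3))) (.const _))))

theorem primrec_stepAtoms : Primrec stepAtoms := by
  have hadd : ∀ d, Primrec fun m : ℕ => m + d := fun d => Primrec.nat_add.comp .id (.const d)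
  unfold stepAtoms
  repeat' first
    | exact .const _
    | exact hadd _
    | exact .id
    | refine Primrec.list_cons.comp (.pair ?_ ?_) ?_

theorem primrec_stepCodes : Primrec stepCodes := by
  have hatoms : Primrec₂ fun (m : ℕ) (q : ℕ × ℕ) =>
      numeralCode 0 :: symbolCodes (adjFormula (m + 3) q.1 q.2) :=
    Primrec.list_cons.comp (.const _) (primrec_symbolCodes_adjFormula
      (Primrec.nat_add.comp .fst (.const 3)) (Primrec.fst.comp .snd) (Primrec.snd.comp .snd))
  exact Primrec.list_append.comp (.const _) (Primrec.list_flatMap primrec_stepAtoms hatoms)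

theorem primrec_symbolCodes_notReachesFormula (m : ℕ) :
    Primrec fun k => symbolCodes (notReachesFormula k m) := by
  have hm : Primrec fun j => m + 3 * j :=
    Primrec.nat_add.comp (.const m) (Primrec.nat_mul.comp (.const 3) .id)
  simp only [symbolCodes_notReachesFormula _ m]
  exact Primrec.list_append.comp
    (Primrec.list_flatMap Primrec.list_range ((primrec_stepCodes.comp hm).comp .snd).to₂)
    (primrec_symbolCodes_notReachesFormula_zero.comp hm)

theorem primrec_sentenceCode_haltingSentence (M : ℕ) (c : Code) :
    Primrec fun k => sentenceCode (haltingSentence M c k) := by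
  obtain ⟨l, hl⟩ := exists_symbolCodes_alls (8 + M + 1)
  have h : Primrec fun k => symbolCodes (haltingSentence M c k) := by
    simp only [haltingSentence, symbolCodes_imp, hl]
    exact Primrec.list_cons.comp (.const _) (Primrec.list_append.comp (Primrec.list_append.comp
      (.const _) (Primrec.list_cons.comp (.const _) (Primrec.list_append.comp (.const _)
        (primrec_symbolCodes_notReachesFormula _)))) (.const _))
  exact (Primrec.encode.comp h).of_eq fun k => encode_map_encode _

end Encoding

section Halting

open FirstOrder.Language (Sentence)
open Nat.Partrec (Code)

variable {M : ℕ}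

theorem Interp.IsValuation.val_eq_of_reaches {V : Type} {G : SimpleGraph V} {g : Param M → V}
    {val : {v // G.Adj v (g .num)} → ℕ} (hval : (graphInterp G g).IsValuation val)
    {z : {v // G.Adj v (g .num)}} (hz : (graphInterp G g).IsZero z) {k : ℕ}
    {y : {v // G.Adj v (g .num)}}
    (h : Reaches (SuccStep G (g .num) (g .port) (g (.rel .succ))) z k y) : val y = k := by
  induction k generalizing y with
  | zero => exact Subtype.ext h ▸ (hval.isZero_iff z).1 hz
  | succ k ih =>
    obtain ⟨y', ⟨hy', hstep⟩, hreach⟩ := h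
    rw [hval.succ ⟨y', hy'⟩ y hstep, ih hreach]

theorem eval_dom_of_realize_haltingSentence {V : Type} [Finite V] {G : SimpleGraph V} {c : Code}
    {k : ℕ} (h : @Sentence.Realize _ V G.structure (haltingSentence M c k)) :
    (c.eval k).Dom := by
  obtain ⟨g, ⟨⟨hO, hP, hJ⟩, ⟨z, hz, hz0⟩, x, y, hx, hrun⟩, hreach⟩ :=
    (realize_haltingSentence G c k).1 h
  obtain ⟨val, hval⟩ := hO.exists_isValuation hP
  rw [← hz, ← hx] at hreach
  exact Part.dom_iff_mem.2 ⟨_, hval.val_eq_of_reaches hz0 hreach ▸ hJ.soundFor hval c x y hrun⟩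

theorem reaches_of_equiv_standardInterp {N B : ℕ} {V : Type} {G : SimpleGraph V} {g : Param M → V}
    {φ : Fin (B + 1) ≃ {v // G.Adj v (g .num)}}
    (hφ : ∀ s x y, graphInterp G g s (φ x) (φ y) ↔ standardInterp M N B s x y) (k : ℕ)
    (hk : k < B + 1) :
    Reaches (SuccStep G (g .num) (g .port) (g (.rel .succ))) (φ 0) k (φ ⟨k, hk⟩) := by
  induction k with
  | zero => rfl
  | succ k ih =>
    exact ⟨φ ⟨k, by lia⟩, ⟨(φ _).2, (hφ .succ ⟨k, by lia⟩ ⟨k + 1, hk⟩).2 rfl⟩, ih (by lia)⟩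

theorem realize_haltingSentence_of_hasIsolatedCopy {N B : ℕ} (hB : BoundsRuns M N B) {c : Code}
    (hc : Encodable.encode c ≤ M) {k m : ℕ} (hm : m ∈ Code.evaln N c k) {V : Type}
    {G : SimpleGraph V} (hG : HasIsolatedCopy (codingGraph (standardInterp M N B)) G) :
    @Sentence.Realize _ V G.structure (haltingSentence M c k) := by
  obtain ⟨ι, hι⟩ := hG
  obtain ⟨φ, hφ⟩ := exists_equiv_of_isolated_codingGraph hι
  have hk : k < B + 1 := (Code.evaln_bound hm).trans_le (hB.1.trans (Nat.le_succ B))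
  have hmB : m < B + 1 := Nat.lt_succ_iff.2 (hB.2 c hc k m hm)
  let g : Param M → V
    | .num => ι .numClass
    | .port => ι .portClass
    | .zero => φ 0
    | .input => φ ⟨k, hk⟩
    | .rel s => ι (.symbol s)
  refine (realize_haltingSentence G c k).2 ⟨g, ⟨?_, ?_, ?_⟩, ?_⟩
  · exact (isArithmetic_standardInterp hB).of_equiv φ hφ
  · exact ⟨φ 0, rfl, (Interp.isZero_equiv_iff φ hφ 0).2 (isZero_standardInterp.2 rfl)⟩
  · exact ⟨φ ⟨k, hk⟩, φ ⟨m, hmB⟩, rfl,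
      (Interp.runs_equiv_iff φ hφ c _ _).2 ((runs_standardInterp hc).2 hm)⟩
  · exact reaches_of_equiv_standardInterp (g := g) hφ k hk

theorem exists_realize_haltingSentence_of_eval_dom {c : Code} {k : ℕ} (h : (c.eval k).Dom) :
    ∃ (W : Type) (_ : Finite W) (H : SimpleGraph W), ∀ {V : Type} {G : SimpleGraph V},
      HasIsolatedCopy H G →
        @Sentence.Realize _ V G.structure (haltingSentence (Encodable.encode c) c k) := by
  obtain ⟨m, hm⟩ := Part.dom_iff_mem.1 h
  obtain ⟨N, hN⟩ := Code.evaln_complete.1 hm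
  obtain ⟨B, hB⟩ := exists_boundsRuns (Encodable.encode c) N
  exact ⟨_, inferInstance, codingGraph (standardInterp (Encodable.encode c) N B),
    realize_haltingSentence_of_hasIsolatedCopy hB le_rfl hN⟩

end Halting

section Probability

theorem sum_filter_eq_zero_mul_sq_le {Ω : Type} [Fintype Ω] {w : Ω → ℝ} (hw : ∀ ω, 0 ≤ w ω)
    (hw_sum : ∑ ω, w ω = 1) (X : Ω → ℝ) :
    (∑ ω with X ω = 0, w ω) * (∑ ω, w ω * X ω) ^ 2 ≤
      ∑ ω, w ω * X ω ^ 2 - (∑ ω, w ω * X ω) ^ 2 := by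
  set μ := ∑ ω, w ω * X ω with hμ
  calc (∑ ω with X ω = 0, w ω) * μ ^ 2
      = ∑ ω with X ω = 0, w ω * (X ω - μ) ^ 2 := by
        rw [Finset.sum_mul]
        refine Finset.sum_congr rfl fun ω hω => ?_
        rw [(Finset.mem_filter.1 hω).2, zero_sub, neg_sq]
    _ ≤ ∑ ω, w ω * (X ω - μ) ^ 2 :=
        Finset.sum_le_univ_sum_of_nonneg fun ω => mul_nonneg (hw ω) (sq_nonneg _)
    _ = ∑ ω, (w ω * X ω ^ 2 - 2 * μ * (w ω * X ω) + μ ^ 2 * w ω) :=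
        Finset.sum_congr rfl fun ω _ => by ring
    _ = ∑ ω, w ω * X ω ^ 2 - μ ^ 2 := by
        rw [Finset.sum_add_distrib, Finset.sum_sub_distrib, ← Finset.mul_sum, ← Finset.mul_sum,
          hw_sum, ← hμ]
        ring

theorem one_sub_prod_one_sub_le_sum {α : Type} {s : Finset α} {x : α → ℝ}
    (hx : ∀ a ∈ s, x a ∈ Set.Icc 0 1) : 1 - ∏ a ∈ s, (1 - x a) ≤ ∑ a ∈ s, x a := by
  classical
  induction s using Finset.induction_on with
  | empty => simp
  | insert a s ha ih =>
    obtain ⟨hxa, hxs⟩ := (Finset.forall_mem_insert _ _ _).1 hx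
    rw [Finset.prod_insert ha, Finset.sum_insert ha]
    have hprod : ∏ a ∈ s, (1 - x a) ≤ 1 := Finset.prod_le_one
      (fun b hb => sub_nonneg.2 (hxs b hb).2) fun b hb => sub_le_self 1 (hxs b hb).1
    nlinarith [ih hxs, hxa.1]

variable {p : ℕ → ℝ} {n : ℕ}

/-- The length `|v - w|` of the potential edge `{v, w}`. -/
def edgeLength (e : EdgeIdx n) : ℕ := e.1.2.val - e.1.1.val

theorem edgeLength_mem_Icc (e : EdgeIdx n) : edgeLength e ∈ Finset.Icc 1 n := by
  have hlt : e.1.1.val < e.1.2.val := e.2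
  rw [Finset.mem_Icc, edgeLength]
  lia

/-- The probability that the edge `e` is present, for `b = true`, or absent, for `b = false`. -/
noncomputable def edgeWeight (p : ℕ → ℝ) (e : EdgeIdx n) (b : Bool) : ℝ :=
  if b then p (edgeLength e) else 1 - p (edgeLength e)

theorem sampleWeight_eq_prod (ω : Sample n) : sampleWeight p ω = ∏ e, edgeWeight p e (ω e) := rfl

theorem edgeWeight_mem_Icc (hp : ∀ d, p d ∈ Set.Icc 0 1) (e : EdgeIdx n) (b : Bool) :
    edgeWeight p e b ∈ Set.Icc 0 1 := by
  obtain ⟨hp0, hp1⟩ := hp (edgeLength e)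
  unfold edgeWeight
  split_ifs <;> constructor <;> linarith

theorem sampleWeight_nonneg (hp : ∀ d, p d ∈ Set.Icc 0 1) (ω : Sample n) : 0 ≤ sampleWeight p ω :=
  Finset.prod_nonneg fun e _ => (edgeWeight_mem_Icc hp e (ω e)).1

theorem Pr_eq_sum_filter (P : Sample n → Prop) [DecidablePred P] :
    Pr p n P = ∑ ω with P ω, sampleWeight p ω := by
  rw [Pr, Finset.sum_filter]
  exact Finset.sum_congr rfl fun ω _ => by congr

theorem Pr_nonneg (hp : ∀ d, p d ∈ Set.Icc 0 1) (P : Sample n → Prop) : 0 ≤ Pr p n P := by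
  classical
  rw [Pr_eq_sum_filter]
  exact Finset.sum_nonneg fun ω _ => sampleWeight_nonneg hp ω

theorem Pr_mono (hp : ∀ d, p d ∈ Set.Icc 0 1) {P Q : Sample n → Prop} (h : ∀ ω, P ω → Q ω) :
    Pr p n P ≤ Pr p n Q := by
  classical
  rw [Pr_eq_sum_filter, Pr_eq_sum_filter]
  exact Finset.sum_le_sum_of_subset_of_nonneg (Finset.monotone_filter_right _ fun ω _ => h ω)
    fun ω _ _ => sampleWeight_nonneg hp ω

theorem Pr_forall_eq (s : Finset (EdgeIdx n)) (f : EdgeIdx n → Bool) :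
    Pr p n (fun ω => ∀ e ∈ s, ω e = f e) = ∏ e ∈ s, edgeWeight p e (f e) := by
  classical
  let allowed (e : EdgeIdx n) : Finset Bool := if e ∈ s then {f e} else Finset.univ
  have hfilter : ({ω | ∀ e ∈ s, ω e = f e} : Finset (Sample n)) = Fintype.piFinset allowed := by
    ext ω
    simp only [Finset.mem_filter_univ, Fintype.mem_piFinset, allowed]
    refine forall_congr' fun e => ?_
    split_ifs with he <;> simp [he]
  have hedge (e : EdgeIdx n) : ∑ b ∈ allowed e, edgeWeight p e b =
      if e ∈ s then edgeWeight p e (f e) else 1 := by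
    simp only [allowed]
    split_ifs <;> simp [edgeWeight]
  rw [Pr_eq_sum_filter, hfilter]
  simp only [sampleWeight_eq_prod, ← Finset.prod_univ_sum, hedge, Finset.prod_ite_mem,
    Finset.univ_inter]

theorem sum_sampleWeight : ∑ ω : Sample n, sampleWeight p ω = 1 := by
  simpa [Pr] using Pr_forall_eq (p := p) (n := n) ∅ fun _ => true

theorem Pr_add_Pr_not (P : Sample n → Prop) : Pr p n P + Pr p n (fun ω => ¬ P ω) = 1 := by
  classical
  rw [Pr_eq_sum_filter, Pr_eq_sum_filter, Finset.sum_filter_add_sum_filter_not, sum_sampleWeight]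

theorem Pr_le_one (hp : ∀ d, p d ∈ Set.Icc 0 1) (P : Sample n → Prop) : Pr p n P ≤ 1 :=
  Pr_add_Pr_not P ▸ le_add_of_nonneg_right (Pr_nonneg hp _)

theorem Pr_forall_not_mul_sq_le (hp : ∀ d, p d ∈ Set.Icc 0 1) {ι : Type} (s : Finset ι)
    (A : ι → Sample n → Prop) :
    Pr p n (fun ω => ∀ i ∈ s, ¬ A i ω) * (∑ i ∈ s, Pr p n (A i)) ^ 2 ≤
      ∑ i ∈ s, ∑ j ∈ s, (Pr p n (fun ω => A i ω ∧ A j ω) - Pr p n (A i) * Pr p n (A j)) := by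
  classical
  let X (ω : Sample n) : ℝ := ∑ i ∈ s, if A i ω then 1 else 0
  have hX0 (ω : Sample n) : X ω = 0 ↔ ∀ i ∈ s, ¬ A i ω := by
    rw [Finset.sum_eq_zero_iff_of_nonneg fun i _ => by positivity]
    simp
  have hmean : ∑ ω, sampleWeight p ω * X ω = ∑ i ∈ s, Pr p n (A i) := by
    simp only [X, Finset.mul_sum, mul_ite, mul_one, mul_zero]
    rw [Finset.sum_comm]
    simp only [← Finset.sum_filter, Pr_eq_sum_filter]
  have hX_sq (ω : Sample n) :
      X ω ^ 2 = ∑ i ∈ s, ∑ j ∈ s, if A i ω ∧ A j ω then 1 else 0 := by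
    simp only [X, sq, Finset.sum_mul_sum, ite_zero_mul_ite_zero, one_mul]
  have hsq : ∑ ω, sampleWeight p ω * X ω ^ 2 =
      ∑ i ∈ s, ∑ j ∈ s, Pr p n (fun ω => A i ω ∧ A j ω) := by
    simp only [hX_sq, Finset.mul_sum, mul_ite, mul_one, mul_zero]
    rw [Finset.sum_comm]
    refine Finset.sum_congr rfl fun i _ => ?_
    rw [Finset.sum_comm]
    simp only [← Finset.sum_filter, Pr_eq_sum_filter]
  have h := sum_filter_eq_zero_mul_sq_le (sampleWeight_nonneg hp) sum_sampleWeight X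
  simp only [hX0, ← Pr_eq_sum_filter, hmean, hsq] at h
  simpa only [Finset.sum_sub_distrib, ← Finset.sum_mul_sum, ← sq] using h

theorem Pr_and_sub_mul_le (hp : ∀ d, p d ∈ Set.Icc 0 1) {f : EdgeIdx n → Bool}
    {s t : Finset (EdgeIdx n)} (hst : ∀ e ∈ s ∩ t, f e = false) :
    Pr p n (fun ω => (∀ e ∈ s, ω e = f e) ∧ ∀ e ∈ t, ω e = f e) -
        Pr p n (fun ω => ∀ e ∈ s, ω e = f e) * Pr p n (fun ω => ∀ e ∈ t, ω e = f e) ≤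
      Pr p n (fun ω => ∀ e ∈ s, ω e = f e) * ∑ e ∈ s ∩ t, p (edgeLength e) := by
  have hunion : Pr p n (fun ω => (∀ e ∈ s, ω e = f e) ∧ ∀ e ∈ t, ω e = f e) =
      ∏ e ∈ s ∪ t, edgeWeight p e (f e) := by
    simp only [← Pr_forall_eq, Finset.mem_union, or_imp, forall_and]
  have hinter : ∏ e ∈ s ∩ t, edgeWeight p e (f e) = ∏ e ∈ s ∩ t, (1 - p (edgeLength e)) :=
    Finset.prod_congr rfl fun e he => by simp [edgeWeight, hst e he]
  have hle : ∏ e ∈ s ∪ t, edgeWeight p e (f e) ≤ Pr p n (fun ω => ∀ e ∈ s, ω e = f e) :=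
    hunion ▸ Pr_mono hp fun ω => And.left
  rw [Pr_forall_eq s, Pr_forall_eq t, ← Finset.prod_union_inter, hunion, ← Pr_forall_eq s, hinter]
  calc _ = (∏ e ∈ s ∪ t, edgeWeight p e (f e)) * (1 - ∏ e ∈ s ∩ t, (1 - p (edgeLength e))) := by
        ring
    _ ≤ _ := mul_le_mul hle (one_sub_prod_one_sub_le_sum fun e _ => hp _)
        (sub_nonneg.2 (Finset.prod_le_one (fun e _ => sub_nonneg.2 (hp _).2)
          fun e _ => sub_le_self 1 (hp _).1)) (Pr_nonneg hp _)

end Probability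

section Blocks

open Finset

variable {p : ℕ → ℝ} {n h : ℕ}

/-- The total `-∑ log (1 - p d)` over the edge lengths `d ≤ n`: up to a factor bounded in terms of
the size of a set of vertices, it bounds `-log` of the probability that this set is isolated. -/
noncomputable def isolationCost (p : ℕ → ℝ) (n : ℕ) : ℝ := ∑ d ∈ Icc 1 n, -Real.log (1 - p d)

/-- The total `-∑ log (p d)` over the edge lengths `d < h`: up to a factor bounded in terms of `h`,
it bounds `-log` of the probability of a prescribed set of edges between `h` consecutive
vertices. -/
noncomputable def patternCost (p : ℕ → ℝ) (h : ℕ) : ℝ := ∑ d ∈ range h, -Real.log (p d)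

theorem le_neg_log_one_sub {x : ℝ} (hx : x < 1) : x ≤ -Real.log (1 - x) := by
  linarith [Real.log_le_sub_one_of_pos (sub_pos.2 hx)]

theorem sum_edgeLength_le_of_injective {G : ℕ → ℝ} (hG : ∀ d, 0 ≤ G d)
    {endpoint : EdgeIdx n → Fin n}
    (hinj : Function.Injective fun e => (endpoint e, edgeLength e)) (s : Finset (Fin n)) :
    ∑ e with endpoint e ∈ s, G (edgeLength e) ≤ #s * ∑ d ∈ Icc 1 n, G d := by
  calc ∑ e with endpoint e ∈ s, G (edgeLength e)
      = ∑ x ∈ ({e | endpoint e ∈ s} : Finset (EdgeIdx n)).map ⟨_, hinj⟩, G x.2 := by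
        simp only [sum_map, Function.Embedding.coeFn_mk]
    _ ≤ ∑ x ∈ s ×ˢ Icc 1 n, G x.2 := by
        refine sum_le_sum_of_subset_of_nonneg ?_ fun x _ _ => hG x.2
        simp only [Finset.subset_iff, Finset.mem_map, mem_filter_univ, Function.Embedding.coeFn_mk]
        rintro _ ⟨e, he, rfl⟩
        exact mem_product.2 ⟨he, edgeLength_mem_Icc e⟩
    _ = #s * ∑ d ∈ Icc 1 n, G d := by simp only [sum_product, sum_const, nsmul_eq_mul]

theorem injective_fst_edgeLength :
    Function.Injective fun e : EdgeIdx n => (e.1.1, edgeLength e) := by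
  rintro ⟨⟨v, w⟩, hvw⟩ ⟨⟨v', w'⟩, hvw'⟩ heq
  simp only [edgeLength, Prod.mk.injEq, Fin.ext_iff, Subtype.mk.injEq] at *
  lia

theorem injective_snd_edgeLength :
    Function.Injective fun e : EdgeIdx n => (e.1.2, edgeLength e) := by
  rintro ⟨⟨v, w⟩, hvw⟩ ⟨⟨v', w'⟩, hvw'⟩ heq
  simp only [edgeLength, Prod.mk.injEq, Fin.ext_iff, Subtype.mk.injEq] at *
  lia

variable {ι : Type} [DecidableEq ι] {c : Fin n → ι} {f : EdgeIdx n → Bool}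

/-- The potential edges with at least one endpoint in the block `{v | c v = i}` of the partition
into blocks given by the labelling `c`. -/
def touching (c : Fin n → ι) (i : ι) : Finset (EdgeIdx n) := {e | c e.1.1 = i ∨ c e.1.2 = i}

theorem mem_touching {i : ι} {e : EdgeIdx n} :
    e ∈ touching c i ↔ c e.1.1 = i ∨ c e.1.2 = i := mem_filter_univ e

theorem sum_touching_edgeLength_le (hc : ∀ i, #{v | c v = i} ≤ h) {G : ℕ → ℝ} (hG : ∀ d, 0 ≤ G d)
    (i : ι) : ∑ e ∈ touching c i, G (edgeLength e) ≤ 2 * h * ∑ d ∈ Icc 1 n, G d := by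
  have hfst := sum_edgeLength_le_of_injective hG injective_fst_edgeLength {v | c v = i}
  have hsnd := sum_edgeLength_le_of_injective hG injective_snd_edgeLength {v | c v = i}
  simp only [mem_filter_univ] at hfst hsnd
  let fstEdges : Finset (EdgeIdx n) := {e | c e.1.1 = i}
  let sndEdges : Finset (EdgeIdx n) := {e | c e.1.2 = i}
  have hunion := sum_union_inter (s₁ := fstEdges) (s₂ := sndEdges) (f := fun e => G (edgeLength e))
  have hinter := sum_nonneg (s := fstEdges ∩ sndEdges) fun e _ => hG (edgeLength e)
  have hcard : (#{v | c v = i} : ℝ) * ∑ d ∈ Icc 1 n, G d ≤ h * ∑ d ∈ Icc 1 n, G d :=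
    mul_le_mul_of_nonneg_right (mod_cast hc i) (sum_nonneg fun d _ => hG d)
  rw [touching, filter_or]
  linarith

theorem sum_sum_touching_inter_le {g : EdgeIdx n → ℝ} (hg : ∀ e, 0 ≤ g e) (s : Finset ι) (i : ι) :
    ∑ j ∈ s.erase i, ∑ e ∈ touching c i ∩ touching c j, g e ≤ ∑ e ∈ touching c i, g e := by
  rw [← sum_biUnion]
  · exact sum_le_sum_of_subset_of_nonneg (biUnion_subset.2 fun j _ => inter_subset_left)
      fun e _ _ => hg e
  · intro j hj k hk hjk
    refine Finset.disjoint_left.2 fun e hej hek => ?_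
    simp only [mem_coe, mem_erase, mem_inter, mem_touching] at hj hk hej hek
    grind

theorem sum_covariance_touching_le (hp : ∀ d, p d ∈ Set.Ioo 0 1) (hc : ∀ i, #{v | c v = i} ≤ h)
    (hf : ∀ e, f e = true → c e.1.1 = c e.1.2) {s : Finset ι} {i : ι} (hi : i ∈ s) :
    ∑ j ∈ s, (Pr p n (fun ω => (∀ e ∈ touching c i, ω e = f e) ∧ ∀ e ∈ touching c j, ω e = f e) -
        Pr p n (fun ω => ∀ e ∈ touching c i, ω e = f e) *
          Pr p n (fun ω => ∀ e ∈ touching c j, ω e = f e)) ≤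
      Pr p n (fun ω => ∀ e ∈ touching c i, ω e = f e) * (1 + 2 * h * isolationCost p n) := by
  have hp' (d : ℕ) : p d ∈ Set.Icc 0 1 := Set.Ioo_subset_Icc_self (hp d)
  set a := fun j => Pr p n fun ω => ∀ e ∈ touching c j, ω e = f e
  have ha (j : ι) : 0 ≤ a j := Pr_nonneg hp' _
  have hcov (j : ι) (hj : j ∈ s.erase i) := Pr_and_sub_mul_le hp' (f := f) (s := touching c i)
    (t := touching c j) fun e he => by
      have hji := ne_of_mem_erase hj
      simp only [mem_inter, mem_touching] at he
      grind
  have hsum : ∑ j ∈ s.erase i, ∑ e ∈ touching c i ∩ touching c j, p (edgeLength e) ≤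
      2 * h * isolationCost p n :=
    calc _ ≤ ∑ e ∈ touching c i, p (edgeLength e) :=
          sum_sum_touching_inter_le (fun e => (hp' _).1) s i
      _ ≤ 2 * h * ∑ d ∈ Icc 1 n, p d := sum_touching_edgeLength_le hc (fun d => (hp' d).1) i
      _ ≤ 2 * h * isolationCost p n := mul_le_mul_of_nonneg_left
        (sum_le_sum fun d _ => le_neg_log_one_sub (hp d).2) (by positivity)
  rw [← add_sum_erase s _ hi, mul_add, mul_one]
  simp only [and_self]
  refine add_le_add (sub_le_self _ (mul_nonneg (ha i) (ha i))) ?_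
  calc _ ≤ ∑ j ∈ s.erase i, a i * ∑ e ∈ touching c i ∩ touching c j, p (edgeLength e) :=
        sum_le_sum hcov
    _ ≤ _ := by
        rw [← mul_sum]
        exact mul_le_mul_of_nonneg_left hsum (ha i)

theorem exp_neg_le_Pr_touching (hp : ∀ d, p d ∈ Set.Ioo 0 1) (hc : ∀ i, #{v | c v = i} ≤ h)
    (hf : ∀ e, f e = true → edgeLength e < h) (i : ι) :
    Real.exp (-(2 * h * (isolationCost p n + patternCost p h))) ≤
      Pr p n (fun ω => ∀ e ∈ touching c i, ω e = f e) := by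
  let G (d : ℕ) : ℝ := -Real.log (1 - p d) + if d < h then -Real.log (p d) else 0
  have hlog (d : ℕ) : 0 ≤ -Real.log (p d) := neg_nonneg.2 (Real.log_nonpos (hp d).1.le (hp d).2.le)
  have hlog' (d : ℕ) : 0 ≤ -Real.log (1 - p d) := (hp d).1.le.trans (le_neg_log_one_sub (hp d).2)
  have hG (d : ℕ) : 0 ≤ G d := add_nonneg (hlog' d) (by split_ifs <;> simp [hlog d])
  have hweight (e : EdgeIdx n) : Real.exp (-G (edgeLength e)) ≤ edgeWeight p e (f e) := by
    obtain ⟨hp0, hp1⟩ := hp (edgeLength e)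
    cases hfe : f e with
    | true =>
      simp only [edgeWeight, if_true, G, if_pos (hf e hfe)]
      exact (Real.le_log_iff_exp_le hp0).1 (by linarith [hlog' (edgeLength e)])
    | false =>
      refine (Real.le_log_iff_exp_le (by simpa [edgeWeight] using hp1)).1 ?_
      simp only [edgeWeight, Bool.false_eq_true, if_false, G]
      split_ifs <;> linarith [hlog (edgeLength e)]
  have hsum : ∑ d ∈ Icc 1 n, G d ≤ isolationCost p n + patternCost p h := by
    rw [sum_add_distrib, ← sum_filter]
    refine add_le_add_right (sum_le_sum_of_subset_of_nonneg ?_ fun d _ _ => hlog d) _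
    exact fun d hd => mem_range.2 (mem_filter.1 hd).2
  calc Real.exp (-(2 * h * (isolationCost p n + patternCost p h)))
      ≤ Real.exp (-∑ e ∈ touching c i, G (edgeLength e)) := by
        refine Real.exp_le_exp.2 (neg_le_neg ((sum_touching_edgeLength_le hc hG i).trans ?_))
        exact mul_le_mul_of_nonneg_left hsum (by positivity)
    _ = ∏ e ∈ touching c i, Real.exp (-G (edgeLength e)) := by
        rw [← sum_neg_distrib, Real.exp_sum]
    _ ≤ ∏ e ∈ touching c i, edgeWeight p e (f e) :=
        prod_le_prod (fun e _ => (Real.exp_pos _).le) fun e _ => hweight e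
    _ = _ := (Pr_forall_eq _ f).symm

theorem Pr_forall_not_touching_mul_card_le (hp : ∀ d, p d ∈ Set.Ioo 0 1)
    (hc : ∀ i, #{v | c v = i} ≤ h) (hfc : ∀ e, f e = true → c e.1.1 = c e.1.2)
    (hfh : ∀ e, f e = true → edgeLength e < h) (s : Finset ι) :
    Pr p n (fun ω => ∀ i ∈ s, ¬ ∀ e ∈ touching c i, ω e = f e) * #s ≤
      Real.exp (2 * h * (2 * isolationCost p n + patternCost p h)) := by
  obtain rfl | hs := s.eq_empty_or_nonempty
  · simp [Real.exp_nonneg]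
  have hp' (d : ℕ) : p d ∈ Set.Icc 0 1 := Set.Ioo_subset_Icc_self (hp d)
  set P := Pr p n fun ω => ∀ i ∈ s, ¬ ∀ e ∈ touching c i, ω e = f e
  set L := isolationCost p n
  set K := patternCost p h
  set μ := ∑ i ∈ s, Pr p n fun ω => ∀ e ∈ touching c i, ω e = f e
  have hμ : #s * Real.exp (-(2 * h * (L + K))) ≤ μ := by
    rw [← nsmul_eq_mul]
    exact card_nsmul_le_sum _ _ _ fun i _ => exp_neg_le_Pr_touching hp hc hfh i
  have hμ_pos : 0 < μ := lt_of_lt_of_le (by have := hs.card_pos; positivity) hμ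
  have hsecond : P * μ ≤ 1 + 2 * h * L := by
    refine le_of_mul_le_mul_right ?_ hμ_pos
    calc P * μ * μ = P * μ ^ 2 := by ring
      _ ≤ _ := Pr_forall_not_mul_sq_le hp' s _
      _ ≤ _ := sum_le_sum fun i hi => sum_covariance_touching_le hp hc hfc hi
      _ = (1 + 2 * h * L) * μ := by rw [← sum_mul, mul_comm]
  calc P * #s = P * (#s * Real.exp (-(2 * h * (L + K)))) * Real.exp (2 * h * (L + K)) := by
        rw [mul_assoc, mul_assoc, ← Real.exp_add, neg_add_cancel, Real.exp_zero, mul_one]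
    _ ≤ P * μ * Real.exp (2 * h * (L + K)) := by
        have := Pr_nonneg hp' (n := n) fun ω => ∀ i ∈ s, ¬ ∀ e ∈ touching c i, ω e = f e
        gcongr
    _ ≤ Real.exp (2 * h * L) * Real.exp (2 * h * (L + K)) := by
        gcongr
        linarith [Real.add_one_le_exp (2 * h * L)]
    _ = Real.exp (2 * h * (2 * L + K)) := by rw [← Real.exp_add]; ring_nf

end Blocks

section Limit

open Finset (Icc range)

variable {p : ℕ → ℝ} {n h : ℕ}

theorem card_filter_div_eq_le (hh : h ≠ 0) (i : ℕ) :
    ({v | v.val / h = i} : Finset (Fin n)).card ≤ h := by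
  refine (Finset.card_le_card_of_injOn (t := range h) (fun v => v.val % h)
    (fun v _ => Finset.mem_coe.2 (Finset.mem_range.2 (Nat.mod_lt _ (Nat.pos_of_ne_zero hh))))
    fun v hv w hw hvw => Fin.ext ?_).trans_eq (Finset.card_range h)
  simp only [Finset.coe_filter_univ, Set.mem_ofPred_eq] at hv hw hvw
  rw [← Nat.div_add_mod v.val h, ← Nat.div_add_mod w.val h, hv, hw, hvw]

theorem edgeLength_lt_of_div_eq (hh : h ≠ 0) {e : EdgeIdx n}
    (he : e.1.1.val / h = e.1.2.val / h) : edgeLength e < h := by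
  have hfst := Nat.div_add_mod e.1.1.val h
  have hsnd := Nat.div_add_mod e.1.2.val h
  have hmod := Nat.mod_lt e.1.2.val (Nat.pos_of_ne_zero hh)
  rw [he] at hfst
  rw [edgeLength]
  lia

theorem le_two_mul_mul_div (hh : h ≠ 0) (hn : h ≤ n) : n ≤ 2 * h * (n / h) := by
  have hmod := Nat.mod_lt n (Nat.pos_of_ne_zero hh)
  have hmul := Nat.le_mul_of_pos_right h (Nat.div_pos hn (Nat.pos_of_ne_zero hh))
  have hdiv := Nat.div_add_mod n h
  lia

theorem eventually_exp_mul_isolationCost_le_sqrt (hp : ∀ d, p d < 1)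
    (hlog : Tendsto (fun n : ℕ => Real.log (∏ i ∈ Icc 1 n, (1 - p i)) / Real.log n) atTop (nhds 0))
    (C : ℝ) : ∀ᶠ n : ℕ in atTop, Real.exp (C * isolationCost p n) ≤ √n := by
  have hcost (n : ℕ) : Real.log (∏ i ∈ Icc 1 n, (1 - p i)) = -isolationCost p n := by
    rw [Real.log_prod fun i _ => (sub_pos.2 (hp i)).ne', isolationCost, Finset.sum_neg_distrib,
      neg_neg]
  have hlim := hlog.const_mul (-C)
  rw [mul_zero] at hlim
  filter_upwards [hlim.eventually_lt_const one_half_pos, eventually_ge_atTop 2] with n hn hn2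
  have hlog_pos : 0 < Real.log n := Real.log_pos (by exact_mod_cast hn2)
  rw [hcost, ← mul_div_assoc, neg_mul_neg, div_lt_iff₀ hlog_pos] at hn
  calc Real.exp (C * isolationCost p n) ≤ Real.exp (Real.log n / 2) := by gcongr; linarith
    _ = √n := by rw [Real.exp_half, Real.exp_log (by positivity)]

theorem tendsto_Pr_forall_not_block (hp : ∀ d, p d ∈ Set.Ioo 0 1)
    (hlog : Tendsto (fun n : ℕ => Real.log (∏ i ∈ Icc 1 n, (1 - p i)) / Real.log n) atTop (nhds 0))
    (hh : h ≠ 0) {f : ∀ n, EdgeIdx n → Bool}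
    (hf : ∀ n e, f n e = true → e.1.1.val / h = e.1.2.val / h) :
    Tendsto (fun n => Pr p n fun ω =>
      ∀ i ∈ range (n / h), ¬ ∀ e ∈ touching (fun v => v.val / h) i, ω e = f n e)
      atTop (nhds 0) := by
  let C : ℝ := 2 * h * Real.exp (2 * h * patternCost p h)
  have hsqrt : Tendsto (fun n : ℕ => √(n : ℝ)) atTop atTop :=
    Real.tendsto_sqrt_atTop.comp tendsto_natCast_atTop_atTop
  refine squeeze_zero'
    (.of_forall fun n => Pr_nonneg (fun d => Set.Ioo_subset_Icc_self (hp d)) _) ?_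
    (hsqrt.const_div_atTop C)
  filter_upwards [eventually_exp_mul_isolationCost_le_sqrt (fun d => (hp d).2) hlog (4 * h),
    eventually_ge_atTop h] with n hexp hn
  have hbound := Pr_forall_not_touching_mul_card_le hp (card_filter_div_eq_le hh) (hf n)
    (fun e he => edgeLength_lt_of_div_eq hh (hf n e he)) (range (n / h))
  rw [Finset.card_range] at hbound
  set P := Pr p n _
  have hP : 0 ≤ P := Pr_nonneg (fun d => Set.Ioo_subset_Icc_self (hp d)) _
  have hn_pos : 0 < √(n : ℝ) := (Real.exp_pos _).trans_le hexp
  rw [le_div_iff₀ hn_pos]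
  refine le_of_mul_le_mul_right ?_ hn_pos
  calc P * √n * √n = P * n := by rw [mul_assoc, Real.mul_self_sqrt n.cast_nonneg]
    _ ≤ P * (2 * h * (n / h : ℕ)) := by gcongr; exact_mod_cast le_two_mul_mul_div hh hn
    _ = 2 * h * (P * (n / h : ℕ)) := by ring
    _ ≤ 2 * h * Real.exp (2 * h * (2 * isolationCost p n + patternCost p h)) := by gcongr
    _ = C * Real.exp (4 * h * isolationCost p n) := by
      rw [mul_assoc (2 * h : ℝ) (Real.exp _), ← Real.exp_add]
      ring_nf
    _ ≤ C * √n := by gcongr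

/-- The outcome `ω` of the random graph as a simple graph. -/
def sampleGraph (ω : Sample n) : SimpleGraph (Fin n) where
  Adj := sampleAdj ω
  symm := ⟨fun _ _ ⟨e, he, hvw⟩ => ⟨e, he, hvw.symm⟩⟩
  loopless := ⟨fun v ⟨e, _, hv⟩ => by have := e.2; lia⟩

theorem sampleGraph_adj_iff {ω : Sample n} (e : EdgeIdx n) :
    (sampleGraph ω).Adj e.1.1 e.1.2 ↔ ω e = true := by
  refine ⟨?_, fun he => ⟨e, he, .inl ⟨rfl, rfl⟩⟩⟩
  rintro ⟨e', he', ⟨hfst, hsnd⟩ | ⟨hfst, hsnd⟩⟩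
  · rwa [← show e' = e from Subtype.ext (Prod.ext (Fin.ext hfst) (Fin.ext hsnd))]
  · have h : e.1.1 < e.1.2 := e.2
    have h' : e'.1.1 < e'.1.2 := e'.2
    lia

theorem satL_iff_realize_sampleGraph (ω : Sample n) (ψ : Language.graph.Sentence) :
    SatL ω ψ ↔ @Language.Sentence.Realize _ _ (sampleGraph ω).structure ψ :=
  Iff.rfl

open scoped Classical in
/-- The edges of a graph on `Fin n` whose blocks of `h` consecutive vertices are disjoint copies
of `H`, with no edges between different blocks. -/
noncomputable def blockPattern [NeZero h] (H : SimpleGraph (Fin h)) (e : EdgeIdx n) : Bool :=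
  decide (e.1.1.val / h = e.1.2.val / h ∧ H.Adj (Fin.ofNat h e.1.1) (Fin.ofNat h e.1.2))

variable [NeZero h]

theorem blockPattern_eq_true_iff {H : SimpleGraph (Fin h)} {e : EdgeIdx n} :
    blockPattern H e = true ↔
      e.1.1.val / h = e.1.2.val / h ∧ H.Adj (Fin.ofNat h e.1.1) (Fin.ofNat h e.1.2) := by
  simp only [blockPattern, decide_eq_true_eq]

variable {H : SimpleGraph (Fin h)} {ω : Sample n} {i : ℕ}

theorem sampleGraph_adj_iff_of_block
    (hω : ∀ e ∈ touching (fun v => v.val / h) i, ω e = blockPattern H e) {v : Fin n}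
    (hv : v.val / h = i) (w : Fin n) :
    (sampleGraph ω).Adj v w ↔ w.val / h = i ∧ H.Adj (Fin.ofNat h v) (Fin.ofNat h w) := by
  obtain hvw | rfl | hwv := lt_trichotomy v w
  · rw [sampleGraph_adj_iff ⟨(v, w), hvw⟩, hω _ (mem_touching.2 (.inl hv)),
      blockPattern_eq_true_iff, hv, eq_comm (a := i)]
  · simp
  · rw [SimpleGraph.adj_comm, sampleGraph_adj_iff ⟨(w, v), hwv⟩, hω _ (mem_touching.2 (.inr hv)),
      blockPattern_eq_true_iff, hv, SimpleGraph.adj_comm]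

theorem hasIsolatedCopy_of_block (hi : i < n / h)
    (hω : ∀ e ∈ touching (fun v => v.val / h) i, ω e = blockPattern H e) :
    HasIsolatedCopy H (sampleGraph ω) := by
  have hlt (a : Fin h) : i * h + a < n := by
    have := Nat.mul_le_of_le_div h (i + 1) n hi
    lia
  let vertex (a : Fin h) : Fin n := ⟨i * h + a, hlt a⟩
  have hdiv (a : Fin h) : (vertex a).val / h = i :=
    congrArg Prod.fst ((Nat.divModEquiv h).apply_symm_apply (i, a))
  have hmod (a : Fin h) : Fin.ofNat h (vertex a) = a :=
    congrArg Prod.snd ((Nat.divModEquiv h).apply_symm_apply (i, a))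
  have hadj (a : Fin h) (w : Fin n) := sampleGraph_adj_iff_of_block hω (hdiv a) w
  have hinj : Function.Injective vertex := fun a b hab => by rw [← hmod a, hab, hmod]
  refine ⟨⟨⟨vertex, hinj⟩, fun {a b} => ?_⟩, fun a v hav => ⟨Fin.ofNat h v, Fin.ext ?_⟩⟩
  · change (sampleGraph ω).Adj (vertex a) (vertex b) ↔ H.Adj a b
    rw [hadj, hdiv, hmod, hmod, and_iff_right rfl]
  · obtain ⟨rfl, -⟩ := (hadj a v).1 hav
    exact (Nat.divModEquiv h).symm_apply_apply v

theorem HasIsolatedCopy.of_isEmpty {W V : Type} [IsEmpty W] (H : SimpleGraph W)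
    (G : SimpleGraph V) : HasIsolatedCopy H G :=
  ⟨⟨.ofIsEmpty, fun {a} => isEmptyElim a⟩, isEmptyElim⟩

theorem tendsto_Pr_hasIsolatedCopy (hp : ∀ d, p d ∈ Set.Ioo 0 1)
    (hlog : Tendsto (fun n : ℕ => Real.log (∏ i ∈ Icc 1 n, (1 - p i)) / Real.log n) atTop (nhds 0))
    {W : Type} [Finite W] (H : SimpleGraph W) :
    Tendsto (fun n => Pr p n fun ω => HasIsolatedCopy H (sampleGraph ω)) atTop (nhds 1) := by
  have hp' (d : ℕ) : p d ∈ Set.Icc 0 1 := Set.Ioo_subset_Icc_self (hp d)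
  have hPr (n : ℕ) := eq_sub_of_add_eq
    (Pr_add_Pr_not (p := p) fun ω : Sample n => HasIsolatedCopy H (sampleGraph ω))
  suffices hnot : Tendsto (fun n => Pr p n fun ω => ¬ HasIsolatedCopy H (sampleGraph ω)) atTop
      (nhds 0) by
    simpa only [hPr, sub_zero] using hnot.const_sub 1
  obtain hW | hW := isEmpty_or_nonempty W
  · simp [Pr, HasIsolatedCopy.of_isEmpty]
  have := Fintype.ofFinite W
  have : NeZero (Fintype.card W) := ⟨Fintype.card_ne_zero⟩
  let H' : SimpleGraph (Fin (Fintype.card W)) := H.overFin rfl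
  refine squeeze_zero (fun n => Pr_nonneg hp' _) (fun n => Pr_mono hp' fun ω hω i hi hblock => ?_)
    (tendsto_Pr_forall_not_block hp hlog Fintype.card_ne_zero (f := fun n => blockPattern H')
      fun n e he => (blockPattern_eq_true_iff.1 he).1)
  exact hω ((hasIsolatedCopy_of_block (Finset.mem_range.1 hi) hblock).congr (H.overFinIso rfl))

end Limit

section Undecidability

open Nat.Partrec (Code)

theorem tendsto_ProbL_haltingSentence_iff {p : ℕ → ℝ} (hp : ∀ d, p d ∈ Set.Ioo 0 1)
    (hlog : Tendsto (fun n : ℕ => Real.log (∏ i ∈ Finset.Icc 1 n, (1 - p i)) / Real.log n) atTop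
      (nhds 0)) (c : Code) (k : ℕ) :
    Tendsto (fun n => ProbL p n (haltingSentence (Encodable.encode c) c k)) atTop (nhds 1) ↔
      (c.eval k).Dom := by
  have hp' (d : ℕ) : p d ∈ Set.Icc 0 1 := Set.Ioo_subset_Icc_self (hp d)
  refine ⟨fun hlim => ?_, fun hdom => ?_⟩
  · by_contra hdom
    have hzero (n : ℕ) : ProbL p n (haltingSentence (Encodable.encode c) c k) = 0 :=
      Finset.sum_eq_zero fun ω _ => if_neg fun hω => hdom <|
        eval_dom_of_realize_haltingSentence ((satL_iff_realize_sampleGraph ω _).1 hω)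
    simp only [hzero] at hlim
    exact zero_ne_one (tendsto_nhds_unique tendsto_const_nhds hlim)
  · obtain ⟨W, hW, H, hH⟩ := exists_realize_haltingSentence_of_eval_dom hdom
    refine tendsto_of_tendsto_of_tendsto_of_le_of_le (tendsto_Pr_hasIsolatedCopy hp hlog H)
      tendsto_const_nhds (fun n => Pr_mono hp' fun ω hω => ?_) fun n => ?_
    · exact (satL_iff_realize_sampleGraph ω _).2 (hH hω)
    · exact Pr_le_one hp' _

theorem exists_code_eval_eq_eval_zero :
    ∃ c : Code, ∀ a : Code, c.eval (Encodable.encode a) = a.eval 0 := by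
  obtain ⟨c, hc⟩ := Code.exists_code.1 <| Partrec.nat_iff.1 <|
    Code.eval_part.comp (Computable.ofNat Code) (Computable.const 0)
  exact ⟨c, fun a => by simp only [hc, Denumerable.ofNat_encode]⟩

end Undecidability

/-- Let `p̄` with `0 < p i < 1` satisfy
`log (∏_{i=1}^n (1 - p i)) / log n → 0` (so that a zero-one law holds for `L`).  Then there
is no computable procedure deciding, for a sentence `ψ` of `L` (given by its standard
encoding `sentenceCode ψ`), whether `Prob(n, p̄; ψ) → 1` or `Prob(n, p̄; ψ) → 0`. -/
theorem statement_17 (p : ℕ → ℝ) (hp : ∀ i, 0 < p i ∧ p i < 1)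
    (hlog : Tendsto
      (fun n : ℕ => Real.log (∏ i ∈ Finset.Icc 1 n, (1 - p i)) / Real.log n) atTop (nhds 0)) :
    ¬ ∃ d : ℕ → Bool, Computable d ∧
        ∀ ψ : Language.graph.Sentence,
          (d (sentenceCode ψ) = true ↔ Tendsto (fun n => ProbL p n ψ) atTop (nhds 1)) := by
  rintro ⟨d, hd, hspec⟩
  obtain ⟨c, hc⟩ := exists_code_eval_eq_eval_zero
  let ψ (k : ℕ) : Language.graph.Sentence := haltingSentence (Encodable.encode c) c k
  have hdecide (a : Nat.Partrec.Code) :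
      (a.eval 0).Dom ↔ d (sentenceCode (ψ (Encodable.encode a))) = true := by
    rw [hspec, tendsto_ProbL_haltingSentence_iff hp hlog, hc]
  have hcomputable : Computable fun a : Nat.Partrec.Code =>
      d (sentenceCode (ψ (Encodable.encode a))) :=
    hd.comp ((primrec_sentenceCode_haltingSentence _ c).to_comp.comp Computable.encode)
  exact ComputablePred.halting_problem 0 <|
    ComputablePred.computable_iff.2 ⟨_, hcomputable, funext fun a => propext (hdecide a)⟩

end RandomGraph
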